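/- arXiv:1309.6239 — 5 statements merged into one kernel-verified Lean document; each statement's English description precedes it below -/
import Mathlib

section
/- Let F be a number field and let α_1, …, α_t ∈ F^× be finitely many elements, none of which is a square in F^×. Then the set of finite places v of F such that α_i is a square in the completion F_v for every 1 ≤ i ≤ t is infinite. -/
/-!
The nonzero `α i` become squares in a number field `L ⊇ F`. It suffices to find infinitely many
primes `P` of `𝓞 L` modulo which every element is congruent to a rational integer: if `β ^ 2 = α`
in `L` and `β ≡ m` modulo `P` with `m : ℤ`, then `m ^ 2 ≡ α` modulo `v = P ∩ 𝓞 F`, and when `v`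
contains neither `2` nor `α`, Hensel's lemma makes `α` a square in `F_v`. No splitting of `v` in
`L`, and hence neither the Galois property nor Chebotarev's theorem, is needed.

Such primes come from a Euclid-type argument (`exists_prime`). Let `θ` be an integral generator of
`L` over `ℚ`, let `D * 𝓞 L ⊆ ℤ[θ]` with `D` a nonzero integer, and write `θ * θ' = c` with `c ≠ 0`
an integer. For a given integer `M ≠ 0` put `N = M * D` and `y = θ' * N * k - 1`, so that
`θ * y = c * N * k - θ`. The norm of `θ * y` is the value at `c * N * k` of the characteristic
polynomial of `θ`, which is not constant, so `y` is neither zero nor a unit for some integer `k`.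
A prime `P` containing `y` does not contain `N`, and `θ` is congruent to an integer modulo `P`;
since `D` is invertible modulo `P`, so is every element of `𝓞 L`. Taking `M` divisible by
prescribed integers keeps `v` away from any given finite set of places.
-/

open IsDedekindDomain
open NumberField Polynomial

theorem exists_int_dvd {F : Type*} [Field F] [NumberField F] {x : 𝓞 F} (hx : x ≠ 0) :
    ∃ c : ℤ, c ≠ 0 ∧ x ∣ (c : 𝓞 F) := by
  have h := Ideal.IsIntegral.comap_ne_bot (R := ℤ) (I := Ideal.span {x}) (by simpa using hx)
  obtain ⟨c, hc, hc0⟩ := Submodule.exists_mem_ne_zero_of_ne_bot h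
  exact ⟨c, hc0, by simpa [Ideal.mem_comap, Ideal.mem_span_singleton] using hc⟩

/-- An integral generator `θ` of `L` over `ℚ`, with a common denominator `D` for writing algebraic
integers as integral polynomials in `θ`. The discriminant of the power basis serves as `D`. -/
theorem exists_generator (L : Type*) [Field L] [NumberField L] :
    ∃ θ : 𝓞 L, θ ≠ 0 ∧ ∃ D : ℤ, D ≠ 0 ∧ ∀ z : 𝓞 L, ∃ p : ℤ[X], (D : 𝓞 L) * z = aeval θ p := by
  obtain ⟨γ, hγ0, hγ⟩ : ∃ γ : L, γ ≠ 0 ∧ IntermediateField.adjoin ℚ {γ} = ⊤ := by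
    obtain ⟨γ, hγ⟩ := Field.exists_primitive_element ℚ L
    -- If the generator is zero then `L = ℚ`, and `1` generates as well.
    by_cases h : γ = 0
    · refine ⟨1, one_ne_zero, ?_⟩
      rw [← hγ, h]; simp
    · exact ⟨γ, h, hγ⟩
  have halg : IsAlgebraic ℤ γ :=
    (IsFractionRing.isAlgebraic_iff ℤ ℚ L).2 (Algebra.IsAlgebraic.isAlgebraic γ)
  obtain ⟨n, hn, hint⟩ := halg.exists_integral_multiple
  have hgen : IntermediateField.adjoin ℚ {n • γ} = ⊤ := by
    rw [eq_top_iff, ← hγ, IntermediateField.adjoin_simple_le_iff]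
    have h1 := IntermediateField.mem_adjoin_simple_self ℚ (n • γ)
    have h2 := (IntermediateField.adjoin ℚ {n • γ}).smul_mem h1 (x := (n : ℚ)⁻¹)
    have : (n : ℚ)⁻¹ • n • γ = γ := by
      rw [← Int.cast_smul_eq_zsmul ℚ, smul_smul, inv_mul_cancel₀ (by exact_mod_cast hn), one_smul]
    rwa [this] at h2
  let B : PowerBasis ℚ L := PowerBasis.ofAdjoinEqTop' (x := n • γ) (hint.tower_top) (by
    rw [← IntermediateField.adjoin_simple_toSubalgebra_of_isAlgebraic
      (hint.tower_top (A := ℚ)).isAlgebraic, hgen]; rfl)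
  have hBgen : B.gen = n • γ := by simp [B]
  have hB : IsIntegral ℤ B.gen := by rwa [hBgen]
  obtain ⟨D, hD⟩ := IsIntegrallyClosed.isIntegral_iff.1
    (Algebra.discr_isIntegral ℚ (R := ℤ) (b := B.basis) (fun i => by
      rw [B.basis_eq_pow]; exact hB.pow _))
  obtain ⟨θ, hθ⟩ : ∃ θ : 𝓞 L, algebraMap (𝓞 L) L θ = B.gen := ⟨⟨B.gen, hB⟩, rfl⟩
  refine ⟨θ, ?_, D, ?_, fun z => ?_⟩
  · rintro rfl
    rw [map_zero, hBgen] at hθ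
    exact (smul_ne_zero hn hγ0) hθ.symm
  · rintro rfl
    exact Algebra.discr_not_zero_of_basis ℚ B.basis (by simpa using hD.symm)
  · have := Algebra.discr_mul_isIntegral_mem_adjoin ℚ hB z.isIntegral_coe
    rw [Algebra.adjoin_singleton_eq_range_aeval] at this
    obtain ⟨p, hp⟩ := this
    refine ⟨p, RingOfIntegers.coe_injective ?_⟩
    rw [map_mul, map_intCast, ← aeval_algebraMap_apply, hθ]
    change aeval B.gen p = _ at hp
    rw [hp, ← hD, Algebra.smul_def]
    simp

/-- For every nonzero integer `M` there is a nonzero prime not containing `M` whose residue ring is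
the image of `ℤ`. -/
theorem exists_prime (L : Type*) [Field L] [NumberField L] {M : ℤ} (hM : M ≠ 0) :
    ∃ P : Ideal (𝓞 L), P.IsPrime ∧ P ≠ ⊥ ∧ (M : 𝓞 L) ∉ P ∧
      ∀ z : 𝓞 L, ∃ m : ℤ, z - m ∈ P := by
  obtain ⟨θ, hθ, D, hD, hDz⟩ := exists_generator L
  obtain ⟨c, hc, θ', hθ'⟩ := exists_int_dvd hθ
  set N := M * D with hN
  have hN0 : N ≠ 0 := mul_ne_zero hM hD
  obtain ⟨k, hk0, hku⟩ : ∃ k : ℤ, θ' * N * k - 1 ≠ 0 ∧ ¬ IsUnit (θ' * N * k - 1) := by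
    by_contra! hcon
    set f := (Algebra.lmul ℤ (𝓞 L) θ).charpoly with hf
    have hfm : f.Monic := LinearMap.charpoly_monic _
    have hdeg : 0 < f.degree := by
      rw [hf, ← natDegree_pos_iff_degree_pos, LinearMap.charpoly_natDegree]
      exact Module.finrank_pos
    set B := Algebra.norm ℤ θ
    have hev : ∀ k : ℤ, f.eval (c * N * k) = B * Algebra.norm ℤ (θ' * N * k - 1) := by
      intro k
      rw [← map_mul, hf, LinearMap.eval_charpoly, Algebra.norm_apply]
      congr 1
      rw [← AlgHom.commutes (Algebra.lmul ℤ (𝓞 L)), ← map_sub]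
      change Algebra.lmul ℤ (𝓞 L) _ = Algebra.lmul ℤ (𝓞 L) _
      congr 1
      push_cast [eq_intCast]
      rw [hθ']
      ring
    -- If each `y` is zero or a unit, then `f` takes only the values `0`, `B`, `-B` at infinitely many
    -- integers.
    have hg : f * (f - C B) * (f + C B) = 0 := by
      apply eq_zero_of_infinite_isRoot
      apply Set.Infinite.mono (s := Set.range fun k : ℤ => c * N * k)
      · rintro _ ⟨k, rfl⟩
        simp only [Set.mem_ofPred_eq, IsRoot, eval_mul, eval_sub, eval_add, eval_C, hev]
        by_cases h0 : θ' * (N : 𝓞 L) * k - 1 = 0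
        · simp [h0, Algebra.norm_zero]
        · rcases Int.isUnit_iff.1 ((hcon k h0).map (Algebra.norm ℤ)) with h | h <;> simp [h]
      · exact Set.infinite_range_of_injective fun a b h =>
          mul_left_cancel₀ (mul_ne_zero hc hN0) h
    have h1 : (f - C B).Monic := hfm.sub_of_left (degree_C_le.trans_lt hdeg)
    have h2 : (f + C B).Monic := hfm.add_of_left (degree_C_le.trans_lt hdeg)
    exact ((hfm.mul h1).mul h2).ne_zero hg
  obtain ⟨P, hPmax, hyP⟩ := exists_max_ideal_of_mem_nonunits hku
  have hNP : (N : 𝓞 L) ∉ P := fun h => hPmax.ne_top <| (Ideal.eq_top_iff_one P).2 <| by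
    have := P.sub_mem (P.mul_mem_left (θ' * k) h) hyP
    convert this using 1; ring
  have hcong : θ - ((c * N * k : ℤ) : 𝓞 L) ∈ P := by
    have := P.neg_mem (P.mul_mem_left θ hyP)
    convert this using 1
    push_cast; rw [hθ']; ring
  have hDP : (D : 𝓞 L) ∉ P := fun h => hNP <| by
    rw [hN]; push_cast; exact P.mul_mem_left _ h
  have hMP : (M : 𝓞 L) ∉ P := fun h => hNP <| by
    rw [hN]; push_cast; exact P.mul_mem_right _ h
  refine ⟨P, hPmax.isPrime, ?_, hMP, fun z => ?_⟩
  · rintro rfl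
    exact hk0 (by simpa using hyP)
  -- `D * z` is an integral polynomial in `θ`, and `D` has an inverse `E : ℤ` modulo `P`.
  · have hmax := Ideal.isMaximal_comap_of_isIntegral_of_isMaximal (R := ℤ) P
    obtain ⟨E, i, hi, hE⟩ := hmax.exists_inv (x := D) (by simpa [Ideal.mem_comap] using hDP)
    rw [Ideal.mem_comap, eq_intCast] at hi
    obtain ⟨p, hp⟩ := hDz z
    set n := c * N * k
    have hpn : aeval θ p - ((p.eval n : ℤ) : 𝓞 L) ∈ P := by
      have h := P.mem_of_dvd (sub_dvd_eval_sub θ (n : 𝓞 L) (p.map (Int.castRingHom (𝓞 L)))) hcong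
      convert h using 2
      · simp [aeval_def, eval_map]
      · simp
    refine ⟨E * p.eval n, ?_⟩
    have hED : (E : 𝓞 L) * D + i = 1 := by exact_mod_cast hE
    have := P.add_mem (P.mul_mem_left E hpn) (P.mul_mem_left z hi)
    convert this using 1
    push_cast
    rw [← hp]
    linear_combination (-z) * hED

/-- Hensel's lemma for `X ^ 2 - a` at a unit `b`, in a complete ultrametric field whose residue
characteristic is not `2`. -/
theorem isSquare_of_approx {K : Type*} [NormedField K] [IsUltrametricDist K] [CompleteSpace K]
    {a b : K} (h2 : ‖(2 : K)‖ = 1) (hb : ‖b‖ = 1) (h : ‖b ^ 2 - a‖ < 1) : IsSquare a := by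
  set ε := ‖b ^ 2 - a‖
  have hε : 0 ≤ ε := norm_nonneg _
  -- Newton's iteration; each step squares the error up to a factor of norm one.
  let g : K → K := fun x => x - (x ^ 2 - a) / (2 * x)
  have hinv : ∀ n, ‖g^[n] b‖ = 1 ∧ ‖(g^[n] b) ^ 2 - a‖ ≤ ε ^ (n + 1) := by
    intro n
    induction n with
    | zero => exact ⟨hb, by simp [ε]⟩
    | succ n ih =>
      rw [Function.iterate_succ_apply']
      set x := g^[n] b
      obtain ⟨hx, hxa⟩ := ih
      have hx2 : 2 * x ≠ 0 := by rw [← norm_ne_zero_iff, norm_mul, h2, hx]; simp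
      have hq : ‖(x ^ 2 - a) / (2 * x)‖ ≤ ε ^ (n + 1) := by
        rwa [norm_div, norm_mul, h2, hx, one_mul, div_one]
      have hlt : ε ^ (n + 1) < 1 := pow_lt_one₀ hε h (by simp)
      refine ⟨?_, ?_⟩
      · change ‖x - _‖ = 1
        rw [sub_eq_add_neg, IsUltrametricDist.norm_add_eq_max_of_norm_ne_norm, norm_neg, hx]
        · exact max_eq_left (hq.trans hlt.le)
        · rw [norm_neg, hx]; exact (hq.trans_lt hlt).ne'
      · have : g x ^ 2 - a = ((x ^ 2 - a) / (2 * x)) ^ 2 := by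
          obtain ⟨_, _⟩ := mul_ne_zero_iff.1 hx2
          simp only [g]
          field_simp
          ring
        rw [this, norm_pow]
        calc _ ≤ (ε ^ (n + 1)) ^ 2 := by gcongr
          _ ≤ ε ^ (n + 1 + 1) := by
            rw [← pow_mul]; exact pow_le_pow_of_le_one hε h.le (by omega)
  have hcau : CauchySeq fun n => g^[n] b := by
    refine cauchySeq_of_le_geometric ε ε h fun n => ?_
    obtain ⟨hx, hxa⟩ := hinv n
    rw [Function.iterate_succ_apply', dist_eq_norm]
    simp only [g, sub_sub_cancel]
    rw [norm_div, norm_mul, h2, hx, one_mul, div_one, ← pow_succ']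
    exact hxa
  obtain ⟨y, hy⟩ := cauchySeq_tendsto_of_complete hcau
  have h0 : Filter.Tendsto (fun n => (g^[n] b) ^ 2 - a) Filter.atTop (nhds 0) :=
    squeeze_zero_norm (fun n => (hinv n).2)
      ((tendsto_pow_atTop_nhds_zero_of_lt_one hε h).comp (Filter.tendsto_add_atTop_nat 1))
  have := tendsto_nhds_unique h0 ((hy.pow 2).sub_const a)
  exact ⟨y, by linear_combination this⟩

/-- An algebraic integer that is a unit at `v` and a square modulo `v` is a square in `F_v`, when
`v` does not lie over `2`. -/
theorem isSquare_local {F : Type*} [Field F] [NumberField F] (v : HeightOneSpectrum (𝓞 F))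
    {a b : 𝓞 F} (h2 : (2 : 𝓞 F) ∉ v.asIdeal) (ha : a ∉ v.asIdeal)
    (hab : b ^ 2 - a ∈ v.asIdeal) :
    IsSquare (algebraMap F (v.adicCompletion F) (algebraMap (𝓞 F) F a)) := by
  have hb : b ∉ v.asIdeal := fun hb => ha <| by
    have := v.asIdeal.sub_mem (v.asIdeal.mul_mem_left b hb) hab
    convert this using 1; ring
  have e : ∀ x : F, algebraMap F (v.adicCompletion F) x = FinitePlace.embedding v x :=
    fun _ => rfl
  rw [← FinitePlace.norm_eq_one_iff_notMem F v, ← e] at h2 hb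
  rw [← FinitePlace.norm_lt_one_iff_mem F v, ← e] at hab
  exact isSquare_of_approx (b := algebraMap F (v.adicCompletion F) (algebraMap (𝓞 F) F b))
    (by rwa [map_ofNat, map_ofNat] at h2) hb (by simpa using hab)

theorem exists_numberField_isSquare.{u} {F : Type u} [Field F] [NumberField F] {t : ℕ}
    (a : Fin t → 𝓞 F) : ∃ (L : Type u) (_ : Field L) (_ : NumberField L) (_ : Algebra F L),
      ∀ i, ∃ b : 𝓞 L, b ^ 2 = algebraMap (𝓞 F) (𝓞 L) (a i) := by
  choose β hβ using fun i => IsAlgClosed.exists_pow_nat_eq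
    (algebraMap F (AlgebraicClosure F) (a i)) two_pos
  let L := IntermediateField.adjoin F (Set.range β)
  have : FiniteDimensional F L := IntermediateField.finiteDimensional_adjoin
    fun x _ => (Algebra.IsAlgebraic.isAlgebraic x).isIntegral
  have : NumberField L := NumberField.of_module_finite F L
  refine ⟨L, inferInstance, this, inferInstance, fun i => ?_⟩
  let b : L := ⟨β i, IntermediateField.subset_adjoin F _ ⟨i, rfl⟩⟩
  have hb : b ^ 2 = algebraMap F L (a i) := Subtype.ext (hβ i)
  have hint : IsIntegral ℤ b := by
    refine IsIntegral.of_pow two_pos ?_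
    rw [hb]
    exact (a i).isIntegral_coe.map (IsScalarTower.toAlgHom ℤ F L)
  exact ⟨⟨b, hint⟩, RingOfIntegers.ext hb⟩

/-- Let `F` be a number field and `α 1, …, α t ∈ F^×` finitely many
elements, none of which is a square. Then the set of finite places `v` of `F`
(height-one primes of the ring of integers) such that every `α i` becomes a square in
the completion `F_v` is infinite. -/
theorem infinite_finitePlaces_all_squares
    (F : Type*) [Field F] [NumberField F] (t : ℕ) (α : Fin t → F)
    (hα0 : ∀ i, α i ≠ 0) (hαns : ∀ i, ¬ IsSquare (α i)) :
    {v : HeightOneSpectrum (NumberField.RingOfIntegers F) |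
      ∀ i, IsSquare (algebraMap F (v.adicCompletion F) (α i))}.Infinite := by
  -- Multiplying `α i` by a nonzero square makes it integral.
  have hclear : ∀ i, ∃ a : 𝓞 F, ∃ d : F, d ≠ 0 ∧ algebraMap (𝓞 F) F a = α i * d ^ 2 := by
    intro i
    obtain ⟨r, s, hs, hrs⟩ := IsFractionRing.div_surjective (A := 𝓞 F) (α i)
    have hs0 : algebraMap (𝓞 F) F s ≠ 0 :=
      IsFractionRing.to_map_ne_zero_of_mem_nonZeroDivisors hs
    refine ⟨r * s, algebraMap (𝓞 F) F s, hs0, ?_⟩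
    rw [← hrs, map_mul]
    field_simp
  choose a d hd had using hclear
  have ha0 : ∀ i, a i ≠ 0 := fun i h => mul_ne_zero (hα0 i) (pow_ne_zero 2 (hd i)) <| by
    rw [← had, h, map_zero]
  obtain ⟨L, _, _, _, hL⟩ := exists_numberField_isSquare a
  choose b hb using hL
  choose c hc0 hc using fun i => exists_int_dvd (ha0 i)
  have hprime : ∀ v : HeightOneSpectrum (𝓞 F), ∃ n : ℤ, n ≠ 0 ∧ (n : 𝓞 F) ∈ v.asIdeal := by
    intro v
    obtain ⟨x, hx, hx0⟩ := Submodule.exists_mem_ne_zero_of_ne_bot v.ne_bot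
    obtain ⟨n, hn, hxn⟩ := exists_int_dvd hx0
    exact ⟨n, hn, v.asIdeal.mem_of_dvd hxn hx⟩
  choose n hn0 hn using hprime
  -- If the set is finite, choose `M` so that avoiding `M` excludes every place of the set, the places
  -- over `2`, and those dividing some `a i`.
  intro hfin
  set M : ℤ := 2 * (∏ i, c i) * ∏ v ∈ hfin.toFinset, n v
  have hM : M ≠ 0 := mul_ne_zero
    (mul_ne_zero two_ne_zero (Finset.prod_ne_zero_iff.2 fun i _ => hc0 i))
    (Finset.prod_ne_zero_iff.2 fun v _ => hn0 v)
  obtain ⟨P, hP, hP0, hMP, hPz⟩ := exists_prime L hM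
  let v : HeightOneSpectrum (𝓞 F) :=
    ⟨P.comap (algebraMap (𝓞 F) (𝓞 L)), hP.comap _, Ideal.IsIntegral.comap_ne_bot (𝓞 F) hP0⟩
  have hdvd : ∀ m : ℤ, m ∣ M → (m : 𝓞 F) ∉ v.asIdeal := by
    intro m hm h
    refine hMP (P.mem_of_dvd (Int.cast_dvd_cast _ _ hm) ?_)
    simpa [v, Ideal.mem_comap] using h
  have hv : v ∈ hfin.toFinset := by
    rw [Set.Finite.mem_toFinset]
    intro i
    obtain ⟨m, hm⟩ := hPz (b i)
    have hsq : IsSquare (algebraMap F (v.adicCompletion F) (algebraMap (𝓞 F) F (a i))) := by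
      refine isSquare_local v (b := (m : 𝓞 F)) ?_ ?_ ?_
      · exact_mod_cast hdvd 2 (Dvd.intro _ (mul_assoc 2 _ _).symm)
      · exact fun h => hdvd (c i)
          (((Finset.dvd_prod_of_mem c (Finset.mem_univ i)).mul_left 2).mul_right _)
          (v.asIdeal.mem_of_dvd (hc i) h)
      · change algebraMap (𝓞 F) (𝓞 L) _ ∈ P
        rw [map_sub, map_pow, map_intCast, ← hb]
        have := P.neg_mem (P.mul_mem_left (b i + m) hm)
        convert this using 1; ring
    rw [had, map_mul, map_pow] at hsq
    have hd' : algebraMap F (v.adicCompletion F) (d i) ≠ 0 := by simpa using hd i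
    obtain ⟨y, hy⟩ := hsq
    refine ⟨y / algebraMap F (v.adicCompletion F) (d i), ?_⟩
    rw [div_mul_div_comm, ← hy, ← sq, mul_div_cancel_right₀ _ (pow_ne_zero 2 hd')]
  exact hdvd (n v) ((Finset.dvd_prod_of_mem n hv).mul_left _) (hn v)
end

section
/- For every positive integer M, the set of prime numbers p such that every integer n with 1 ≤ n ≤ M is a quadratic residue modulo p (i.e. the image of n in ℤ/pℤ is a square) is infinite. -/
/-!
Take a prime `p ≡ 1` modulo `8 * M !`; there are infinitely many of these, by the elementary
case of Dirichlet's theorem. For an odd prime `q ≤ M`, quadratic reciprocity (with `p ≡ 1 mod 4`)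
says that `q` is a square modulo `p` iff `p` is a square modulo `q`, and `p ≡ 1 mod q`. The
prime `2` is a square since `p ≡ 1 mod 8`. As squares are closed under multiplication, every
`1 ≤ n ≤ M` is a square modulo `p`.
-/

lemma isSquare_prime_of_modEq_one {p q : ℕ} (hp : p.Prime) (hq : q.Prime)
    (h8 : p ≡ 1 [MOD 8]) (hpq : p ≡ 1 [MOD q]) : IsSquare (q : ZMod p) := by
  have := Fact.mk hp
  have := Fact.mk hq
  have h8' : p % 8 = 1 := h8
  by_cases hq2 : q = 2
  · subst hq2
    exact_mod_cast (ZMod.exists_sq_eq_two_iff (by omega)).2 (Or.inl h8')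
  · rw [ZMod.exists_sq_eq_prime_iff_of_mod_four_eq_one (by omega) hq2,
      (ZMod.natCast_eq_natCast_iff p 1 q).2 hpq, Nat.cast_one]
    exact IsSquare.one

/-- For every positive integer `M`, the set of primes `p` such that every
integer `n` with `1 ≤ n ≤ M` is a quadratic residue modulo `p` is infinite. -/
theorem infinite_primes_all_quadratic_residues (M : ℕ) (hM : 0 < M) :
    {p : ℕ | p.Prime ∧ ∀ n : ℕ, 1 ≤ n → n ≤ M → IsSquare (n : ZMod p)}.Infinite := by
  have hk : 8 * M.factorial ≠ 0 := mul_ne_zero (by norm_num) M.factorial_ne_zero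
  refine (Nat.infinite_setOfPred_prime_modEq_one hk).mono ?_
  rintro p ⟨hp, hmod⟩
  refine ⟨hp, fun n => ?_⟩
  induction n using induction_on_primes with
  | zero => omega
  | one => simp
  | prime_mul q a hq ih =>
    intro h1 hle
    have ha : 0 < a := Nat.pos_of_mul_pos_left h1
    have hqM : q ≤ M := (Nat.le_mul_of_pos_right q ha).trans hle
    have haM : a ≤ M := (Nat.le_mul_of_pos_left a hq.pos).trans hle
    rw [Nat.cast_mul]
    refine IsSquare.mul (isSquare_prime_of_modEq_one hp hq ?_ ?_) (ih ha haM)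
    · exact hmod.of_dvd (dvd_mul_right _ _)
    · exact hmod.of_dvd ((Nat.dvd_factorial hq.pos hqM).mul_left 8)
end

section
/- Let F be a number field and let ε_1, …, ε_m ∈ F^× be elements such that for every nonempty subset T of {1, …, m} the product ∏_{i∈T} ε_i is not a square in F^× (i.e. ε_1, …, ε_m are multiplicatively independent modulo squares). Then for each l ∈ {1, …, m}, the set of finite places v of F such that ε_l is not a square in F_v while ε_k is a square in F_v for every k ≠ l is infinite. -/
open IsDedekindDomain

/-!
Multiplying each `ε i` by a nonzero square makes it integral. Adjoin to `F` the square roots of the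
`ε k` with `k ≠ l`, obtaining a number field `L`. Independence modulo squares says that `ε l` is
still not a square in `L` (`exists_multiquadratic`). It then suffices to find, away from any
prescribed finite set of primes, a prime `w` of `L` modulo which `ε l` is not a square
(`exists_prime_nonsquare`). Indeed let `v` be the prime of `F` below `w`. Then `ε l` is not a square
modulo `v`, while `ε k` is, for `k ≠ l`: otherwise the product `ε k * ε l` of two nonsquares of the
finite field at `v` would be a square, and since `ε k` is a square modulo `w` so would be `ε l`
(`exists_sub_sq_mem_under`). For `v` prime to `2 * ε k`, being a square in `F_v` is the same as
being a square modulo `v`, by Hensel's lemma.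

The existence of `w` is the analytic input. If `a` is a nonsquare in `L` but a square modulo almost
all primes, then almost all primes `p` of `L` split in `M = L(√a)` into two distinct primes of the
same norm as `p` (`exists_split`). Comparing Euler products for real `s > 1`, the zeta function of
`M` dominates a constant times the square of that of `L`, which is impossible as both have a simple
pole at `s = 1` with positive residue (`no_norm_preserving_doubling`). The comparison is made between
sums in `ℝ≥0∞`, where no convergence question arises.
-/

section
open NumberField Filter Topology
open scoped ENNReal
universe u

/-! ### Squares in completions -/

/-- Hensel's lemma for `X ^ 2 - a` at a unit `c`, when `2` is a unit. Writing `a = c ^ 2 * (1 + t)`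
with `‖t‖ < 1`, a square root is `c * (1 + y)` where `y` is the fixed point of the contraction
`y ↦ (t - y ^ 2) / 2` of the ball of radius `‖t‖`. -/
lemma isSquare_of_norm_sub_sq_lt {K : Type*} [NormedField K] [CompleteSpace K]
    [IsUltrametricDist K] {a c : K} (h2 : ‖(2 : K)‖ = 1) (hc : ‖c‖ = 1)
    (h : ‖a - c ^ 2‖ < 1) : IsSquare a := by
  have hc0 : c ≠ 0 := by rintro rfl; simp at hc
  have h20 : (2 : K) ≠ 0 := by intro h; simp [h] at h2
  set t : K := a / c ^ 2 - 1 with ht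
  have htn : ‖t‖ < 1 := by
    have : t = (a - c ^ 2) / c ^ 2 := by rw [ht]; field_simp
    rw [this, norm_div, norm_pow, hc]; simpa using h
  let g : K → K := fun y ↦ (t - y ^ 2) / 2
  let s : Set K := Metric.closedBall 0 ‖t‖
  have hsf : Set.MapsTo g s s := by
    intro y hy
    simp only [s, mem_closedBall_zero_iff] at hy ⊢
    simp only [g, norm_div, h2, div_one]
    rw [sub_eq_add_neg]
    refine (IsUltrametricDist.norm_add_le_max _ _).trans (max_le le_rfl ?_)
    rw [norm_neg, norm_pow]
    nlinarith [norm_nonneg y]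
  have hcon : ContractingWith ‖t‖₊ (hsf.restrict g s s) := by
    refine ⟨by exact_mod_cast htn, LipschitzWith.of_dist_le_mul fun y z ↦ ?_⟩
    rw [Subtype.dist_eq, Subtype.dist_eq, dist_eq_norm, dist_eq_norm]
    simp only [Set.MapsTo.val_restrict_apply, coe_nnnorm, g]
    have hy := y.2
    have hz := z.2
    simp only [s, mem_closedBall_zero_iff] at hy hz
    have : (t - (y : K) ^ 2) / 2 - (t - (z : K) ^ 2) / 2 = -(((y : K) + z) * (y - z)) / 2 := by ring
    rw [this, norm_div, h2, div_one, norm_neg, norm_mul]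
    gcongr
    exact (IsUltrametricDist.norm_add_le_max _ _).trans (max_le hy hz)
  obtain ⟨y, -, hy, -⟩ := hcon.exists_fixedPoint' Metric.isClosed_closedBall.isComplete
    hsf (x := 0) (by simp [s]) (edist_ne_top _ _)
  have hy' : (t - y ^ 2) / 2 = y := hy
  refine ⟨c * (1 + y), ?_⟩
  have h1 : t = 2 * y + y ^ 2 := by field_simp at hy'; linear_combination hy'
  have h2 : a = (1 + t) * c ^ 2 := by rw [ht]; field_simp; ring
  rw [h2, h1]; ring

section
variable {F : Type*} [Field F] [NumberField F]

lemma isSquare_adicCompletion (v : HeightOneSpectrum (𝓞 F)) {a c : 𝓞 F}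
    (h2 : 2 * a ∉ v.asIdeal) (h : a - c ^ 2 ∈ v.asIdeal) :
    IsSquare (algebraMap F (v.adicCompletion F) a) := by
  have hp := v.isPrime
  have ha : a ∉ v.asIdeal := fun h ↦ h2 (Ideal.mul_mem_left _ _ h)
  have h2' : (2 : 𝓞 F) ∉ v.asIdeal := fun h ↦ h2 (Ideal.mul_mem_right _ _ h)
  have hc : c ∉ v.asIdeal := fun hc ↦ ha <| by
    have := Ideal.add_mem _ h (Ideal.mul_mem_left _ c hc)
    convert this using 1; ring
  have e : ∀ x : F, algebraMap F (v.adicCompletion F) x = FinitePlace.embedding v x := fun _ ↦ rfl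
  have : IsUltrametricDist (v.adicCompletion F) := inferInstance
  refine isSquare_of_norm_sub_sq_lt (c := FinitePlace.embedding v (algebraMap (𝓞 F) F c)) ?_ ?_ ?_
  · have := (FinitePlace.norm_eq_one_iff_notMem F v 2).2 h2'
    rwa [map_ofNat, map_ofNat] at this
  · exact (FinitePlace.norm_eq_one_iff_notMem F v c).2 hc
  · simpa [e] using (FinitePlace.norm_lt_one_iff_mem F v _).2 h

/-- A square root of `a` in the completion is integral, and an element of `𝓞 F` close to it is a square
root of `a` modulo `v`. -/
lemma not_isSquare_adicCompletion (v : HeightOneSpectrum (𝓞 F)) {a : 𝓞 F}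
    (h : ∀ c, a - c ^ 2 ∉ v.asIdeal) :
    ¬ IsSquare (algebraMap F (v.adicCompletion F) a) := by
  rintro ⟨x, hx⟩
  have e : ∀ x : F, algebraMap F (v.adicCompletion F) x = FinitePlace.embedding v x := fun _ ↦ rfl
  have hx1 : ‖x‖ ≤ 1 := by
    have h1 := FinitePlace.norm_le_one F v a
    change ‖algebraMap F (v.adicCompletion F) a‖ ≤ 1 at h1
    rw [hx, norm_mul] at h1
    nlinarith [norm_nonneg x]
  -- approximate `x` first by `y` in `F`, then `y` by an integer `r`
  obtain ⟨y, hy⟩ := (HeightOneSpectrum.denseRange_algebraMap (K := F) v).exists_dist_lt x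
    one_pos
  rw [dist_eq_norm, e] at hy
  obtain ⟨r, hr⟩ : ∃ r : 𝓞 F, ‖FinitePlace.embedding v (y - r)‖ < 1 := by
    have hy1 : ‖FinitePlace.embedding v y‖ ≤ 1 := by
      have : FinitePlace.embedding v y = x + -(x - FinitePlace.embedding v y) := by ring
      rw [this]
      exact (IsUltrametricDist.norm_add_le_max _ _).trans
        (max_le hx1 (by rw [norm_neg]; exact hy.le))
    rw [FinitePlace.norm_embedding'] at hy1
    have hy2 : v.valuation F y ≤ 1 := by
      rw [← WithZeroMulInt.toNNReal_le_one_iff (HeightOneSpectrum.one_lt_absNorm_nnreal v)]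
      exact_mod_cast hy1
    obtain ⟨r, hr⟩ := v.exists_valuation_sub_lt_of_integer hy2 (1 : (WithZero (Multiplicative ℤ))ˣ)
    refine ⟨r, ?_⟩
    rw [FinitePlace.norm_embedding', ← neg_sub, Valuation.map_neg]
    exact_mod_cast (WithZeroMulInt.toNNReal_lt_one_iff
      (HeightOneSpectrum.one_lt_absNorm_nnreal v)).2 hr
  have hxr : ‖x - FinitePlace.embedding v (r : F)‖ < 1 := by
    have : x - FinitePlace.embedding v (r : F) =
      (x - FinitePlace.embedding v y) + FinitePlace.embedding v (y - r) := by
        rw [map_sub]; ring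
    rw [this]
    exact (IsUltrametricDist.norm_add_le_max _ _).trans_lt (max_lt hy hr)
  refine h r ((FinitePlace.norm_lt_one_iff_mem F v _).1 ?_)
  have : FinitePlace.embedding v (algebraMap (𝓞 F) F (a - r ^ 2)) =
      (x - FinitePlace.embedding v (r : F)) * (x + FinitePlace.embedding v (r : F)) := by
    rw [map_sub, map_sub, ← e]
    change algebraMap F (v.adicCompletion F) a - _ = _
    rw [hx, map_pow, map_pow]; ring
  rw [this, norm_mul]
  have := (IsUltrametricDist.norm_add_le_max x (FinitePlace.embedding v (r : F))).trans
    (max_le hx1 (FinitePlace.norm_le_one F v r))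
  nlinarith [norm_nonneg (x - FinitePlace.embedding v (r : F))]

end

/-! ### Euler products as sums over finitely supported exponents -/

/-- The expansion of the Euler product `∏ i, (1 - w i)⁻¹` as the sum, over all finitely supported
exponents `f`, of the monomials `∏ i, w i ^ f i`. Values are in `ℝ≥0∞`, so that the sum always makes
sense. -/
noncomputable def eulerSum {ι : Type*} (w : ι → ℝ≥0∞) : ℝ≥0∞ :=
  ∑' f : ι →₀ ℕ, f.prod fun i n ↦ w i ^ n

lemma eulerSum_sum {ι κ : Type*} (w : ι → ℝ≥0∞) (w' : κ → ℝ≥0∞) :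
    eulerSum (Sum.elim w w') = eulerSum w * eulerSum w' := by
  unfold eulerSum
  rw [← Finsupp.sumFinsuppEquivProdFinsupp.symm.tsum_eq, ENNReal.tsum_prod', ← ENNReal.tsum_mul_right]
  refine tsum_congr fun f ↦ ?_
  rw [← ENNReal.tsum_mul_left]
  refine tsum_congr fun g ↦ ?_
  simp only [Finsupp.sumFinsuppEquivProdFinsupp, Equiv.coe_fn_symm_mk, Finsupp.prod_sumElim]
  rfl

lemma eulerSum_comp_le {ι κ : Type*} (w : κ → ℝ≥0∞) {e : ι → κ} (he : Function.Injective e) :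
    eulerSum (w ∘ e) ≤ eulerSum w := by
  unfold eulerSum
  refine le_of_eq_of_le (tsum_congr fun f ↦ ?_)
    (ENNReal.tsum_comp_le_tsum_of_injective (Finsupp.mapDomain_injective he) _)
  rw [Finsupp.prod_mapDomain_index_inj he]
  rfl

lemma eulerSum_comp_equiv {ι κ : Type*} (w : κ → ℝ≥0∞) (e : ι ≃ κ) :
    eulerSum (w ∘ e) = eulerSum w := by
  refine (eulerSum_comp_le w e.injective).antisymm ?_
  simpa [Function.comp_assoc] using eulerSum_comp_le (w ∘ e) e.symm.injective

lemma eulerSum_mono {ι : Type*} {w w' : ι → ℝ≥0∞} (h : w ≤ w') : eulerSum w ≤ eulerSum w' :=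
  ENNReal.tsum_le_tsum fun _ ↦ Finset.prod_le_prod' fun i _ ↦ pow_le_pow_left' (h i) _

lemma eulerSum_unit (w : Unit → ℝ≥0∞) : eulerSum w = (1 - w ())⁻¹ := by
  unfold eulerSum
  rw [← (Finsupp.uniqueEquiv (M := ℕ) ()).symm.tsum_eq, ← ENNReal.tsum_geometric]
  refine tsum_congr fun n ↦ ?_
  rw [Finsupp.prod_fintype _ _ (by simp)]
  simp

/-- A finite Euler product of convergent geometric series is finite. -/
lemma eulerSum_ne_top {ι : Type*} [Finite ι] :
    ∀ (w : ι → ℝ≥0∞), (∀ i, w i < 1) → eulerSum w ≠ ⊤ := by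
  induction ι using Finite.induction_empty_option with
  | of_equiv e ih =>
    intro w hw
    rw [← eulerSum_comp_equiv w e]
    exact ih _ fun i ↦ hw _
  | h_empty =>
    intro w _
    unfold eulerSum
    rw [tsum_eq_single 0 (fun f hf ↦ (hf (Subsingleton.elim _ _)).elim)]
    simp
  | h_option ih =>
    intro w hw
    have : eulerSum w = eulerSum (fun i ↦ w (some i)) * eulerSum (fun _ : Unit ↦ w none) := by
      rw [← eulerSum_sum, ← eulerSum_comp_equiv w (Equiv.optionEquivSumPUnit _).symm]
      congr 1
      ext (i | i) <;> simp
    rw [this, eulerSum_unit]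
    refine ENNReal.mul_ne_top (ih _ fun i ↦ hw _) ?_
    rw [ENNReal.inv_ne_top, Ne, tsub_eq_zero_iff_le, not_le]
    exact hw none

section
variable {R : Type*} [CommRing R] [IsDedekindDomain R]

/-- Uniqueness of the factorization of an ideal into primes. -/
lemma finsuppProd_injective : Function.Injective
    fun f : HeightOneSpectrum R →₀ ℕ ↦ f.prod fun p n ↦ p.asIdeal ^ n := by
  intro f g h
  ext p
  have key : ∀ f : HeightOneSpectrum R →₀ ℕ,
      FractionalIdeal.count (FractionRing R) p
        ((f.prod fun p n ↦ p.asIdeal ^ n : Ideal R) : FractionalIdeal (nonZeroDivisors R) (FractionRing R)) = f p := by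
    intro f
    have := FractionalIdeal.count_finsuppProd (FractionRing R) p
      (f.mapRange (Nat.cast : ℕ → ℤ) Nat.cast_zero)
    rw [Finsupp.mapRange_apply, Finsupp.prod_mapRange_index (by simp)] at this
    rw [← this, Finsupp.prod, Finsupp.prod, ← FractionalIdeal.coeIdealHom_apply,
      map_prod]
    simp [FractionalIdeal.coeIdealHom, FractionalIdeal.coeIdeal_pow]
  have hfg := key g
  rw [show (g.prod fun p n ↦ p.asIdeal ^ n : Ideal R) = f.prod fun p n ↦ p.asIdeal ^ n from h.symm,
    key f] at hfg
  exact_mod_cast hfg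

/-- Existence of the factorization of a nonzero ideal into primes. -/
lemma exists_finsuppProd_eq {I : Ideal R} (hI : I ≠ 0) :
    ∃ f : HeightOneSpectrum R →₀ ℕ, (f.prod fun p n ↦ p.asIdeal ^ n) = I := by
  classical
  let c := fun v : HeightOneSpectrum R ↦ (Associates.mk v.asIdeal).count (Associates.mk I).factors
  have hfin : (Function.support c).Finite := by
    refine (Associates.finite_factors hI).subset fun v hv ↦ ?_
    simpa [c] using hv
  refine ⟨Finsupp.ofSupportFinite c hfin, ?_⟩
  conv_rhs => rw [← Ideal.finprod_heightOneSpectrum_factorization hI]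
  rw [finprod_eq_prod_of_mulSupport_subset (s := hfin.toFinset)]
  · rfl
  · intro v hv
    rw [Set.Finite.coe_toFinset]
    intro hc
    refine hv ?_
    change v.asIdeal ^ c v = 1
    rw [hc, pow_zero]
end

/-! ### The Dedekind zeta function near `s = 1` -/

section
variable (K : Type*) [Field K] [NumberField K]

/-- The weight `N(p) ^ (-s)` of a prime `p`, so that `eulerSum (primeWeight K s)` is the Dedekind zeta
function of `K` at `s`. -/
noncomputable def primeWeight (s : ℝ) (p : HeightOneSpectrum (𝓞 K)) : ℝ≥0∞ :=
  (Ideal.absNorm p.asIdeal : ℝ≥0∞) ^ (-s)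

/-- The Euler product as a Dirichlet series. The term `n = 0` (the zero ideal) has to be removed by
hand, since `0 ^ (-s) = ⊤` in `ℝ≥0∞` for `s > 0`. -/
lemma eulerSum_primeWeight (s : ℝ) :
    eulerSum (primeWeight K s) =
      ∑' n : ℕ, (Nat.card {I : Ideal (𝓞 K) // Ideal.absNorm I = n} : ℝ≥0∞) *
        if n = 0 then 0 else (n : ℝ≥0∞) ^ (-s) := by
  let g : ℕ → ℝ≥0∞ := fun n ↦ if n = 0 then 0 else (n : ℝ≥0∞) ^ (-s)
  calc
    eulerSum (primeWeight K s) = ∑' f : HeightOneSpectrum (𝓞 K) →₀ ℕ,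
        g (Ideal.absNorm (f.prod fun p n ↦ p.asIdeal ^ n)) := by
      refine tsum_congr fun f ↦ ?_
      have hp : ∀ p : HeightOneSpectrum (𝓞 K), Ideal.absNorm p.asIdeal ≠ 0 := fun p h ↦
        p.ne_bot (Ideal.absNorm_eq_zero_iff.1 h)
      have h0 : Ideal.absNorm (f.prod fun p n ↦ p.asIdeal ^ n) ≠ 0 := by
        rw [Finsupp.prod, map_prod, Finset.prod_ne_zero_iff]
        intro p _
        rw [map_pow]
        exact pow_ne_zero _ (hp p)
      simp only [g, if_neg h0]
      rw [Finsupp.prod, Finsupp.prod, map_prod, Nat.cast_prod,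
        ← ENNReal.prod_rpow_of_ne_top (fun p _ ↦ ENNReal.natCast_ne_top _)]
      refine Finset.prod_congr rfl fun p _ ↦ ?_
      rw [primeWeight, map_pow, Nat.cast_pow, ← ENNReal.rpow_natCast, ← ENNReal.rpow_natCast,
        ← ENNReal.rpow_mul, ← ENNReal.rpow_mul, mul_comm]
    _ = ∑' I : Ideal (𝓞 K), g (Ideal.absNorm I) := by
      refine finsuppProd_injective.tsum_eq (f := fun I : Ideal (𝓞 K) ↦ g (Ideal.absNorm I)) ?_
      intro I hI
      refine exists_finsuppProd_eq ?_
      rintro rfl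
      simp [g] at hI
    _ = ∑' n : ℕ, ∑' I : {I : Ideal (𝓞 K) // Ideal.absNorm I = n}, g n := by
      rw [← (Equiv.sigmaFiberEquiv (Ideal.absNorm : Ideal (𝓞 K) → ℕ)).tsum_eq, ENNReal.tsum_sigma']
      refine tsum_congr fun n ↦ tsum_congr fun I ↦ ?_
      congr 1
      exact I.2
    _ = _ := by
      refine tsum_congr fun n ↦ ?_
      have : Finite {I : Ideal (𝓞 K) // Ideal.absNorm I = n} :=
        Ideal.finite_setOfPred_absNorm_eq n
      rw [ENNReal.tsum_const, ENat.card_eq_coe_natCard]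
      simp [g]

/-- The assumption `dedekindZeta K s ≠ 0` guarantees that the defining series converges, because
`tsum` of a series that is not summable is `0`. -/
lemma eulerSum_primeWeight_eq {s : ℝ} (h : dedekindZeta K s ≠ 0) :
    eulerSum (primeWeight K s) = ENNReal.ofReal ‖dedekindZeta K s‖ := by
  set c : ℕ → ℂ := fun n ↦ (Nat.card {I : Ideal (𝓞 K) // Ideal.absNorm I = n} : ℂ) with hc
  have hsum : Summable (LSeries.term c s) := by
    by_contra hns
    exact h (tsum_eq_zero_of_not_summable hns)
  have hterm : ∀ n, LSeries.term c s n = ((‖LSeries.term c s n‖ : ℝ) : ℂ) := by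
    intro n
    rw [LSeries.term_def]
    split_ifs with hn
    · simp
    · rw [hc, ← Complex.ofReal_natCast n, ← Complex.ofReal_cpow (Nat.cast_nonneg n),
        norm_div, Complex.norm_natCast, Complex.norm_real,
        Real.norm_of_nonneg (Real.rpow_nonneg (Nat.cast_nonneg n) s)]
      push_cast
      rfl
  have hz : ‖dedekindZeta K s‖ = ∑' n, ‖LSeries.term c s n‖ := by
    have : dedekindZeta K s = ∑' n, LSeries.term c s n := rfl
    rw [this, tsum_congr hterm, ← Complex.ofReal_tsum, Complex.norm_real,
      Real.norm_of_nonneg (tsum_nonneg fun _ ↦ norm_nonneg _)]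
  rw [hz, ENNReal.ofReal_tsum_of_nonneg (fun _ ↦ norm_nonneg _) hsum.norm, eulerSum_primeWeight]
  refine tsum_congr fun n ↦ ?_
  rw [LSeries.term_def]
  split_ifs with hn
  · simp
  · rw [hc, ← Complex.ofReal_natCast n, ← Complex.ofReal_cpow (Nat.cast_nonneg n),
        norm_div, Complex.norm_natCast, Complex.norm_real,
        Real.norm_of_nonneg (Real.rpow_nonneg (Nat.cast_nonneg n) s), div_eq_mul_inv,
        ← Real.rpow_neg (Nat.cast_nonneg n), ENNReal.ofReal_mul (Nat.cast_nonneg _),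
        ENNReal.ofReal_natCast, ← ENNReal.ofReal_rpow_of_pos (by positivity), ENNReal.ofReal_natCast]

lemma tendsto_eulerSum_primeWeight :
    Tendsto (fun s : ℝ ↦ ENNReal.ofReal (s - 1) * eulerSum (primeWeight K s)) (𝓝[>] 1)
      (𝓝 (ENNReal.ofReal (dedekindZeta_residue K))) := by
  have h := tendsto_sub_one_mul_dedekindZeta_nhdsGT K
  -- the residue is nonzero, hence so is the zeta function to the right of `1`
  have hne : ∀ᶠ s : ℝ in 𝓝[>] 1, ((s : ℂ) - 1) * dedekindZeta K s ≠ 0 :=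
    h.eventually_ne (by exact_mod_cast dedekindZeta_residue_ne_zero K)
  have h' := (ENNReal.continuous_ofReal.tendsto _).comp h.norm
  rw [Complex.norm_real, Real.norm_of_nonneg (dedekindZeta_residue_pos K).le] at h'
  refine h'.congr' ?_
  filter_upwards [hne, self_mem_nhdsWithin] with s hs hs1
  rw [eulerSum_primeWeight_eq K (right_ne_zero_of_mul hs), Function.comp_apply, norm_mul,
    ENNReal.ofReal_mul (norm_nonneg _)]
  congr 2
  rw [← Complex.ofReal_one, ← Complex.ofReal_sub, Complex.norm_real, Real.norm_of_nonneg]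
  exact (sub_pos.2 hs1).le

end

/-- One cannot attach to almost every prime of `L` two primes of `M` of the same norm, all distinct.
For `s > 1` this would give `ζ_L(s) ^ 2 ≤ C ^ 2 * ζ_M(s)` with `C` independent of `s`; multiplying by
`(s - 1) ^ 2` and letting `s → 1` contradicts the positivity of the residue of `ζ_L`. -/
theorem no_norm_preserving_doubling (L M : Type*) [Field L] [NumberField L] [Field M] [NumberField M]
    {S : Set (HeightOneSpectrum (𝓞 L))} (hS : S.Finite)
    (e : ↥Sᶜ ⊕ ↥Sᶜ → HeightOneSpectrum (𝓞 M)) (he : Function.Injective e)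
    (hl : ∀ p, Ideal.absNorm (e (.inl p)).asIdeal = Ideal.absNorm p.1.asIdeal)
    (hr : ∀ p, Ideal.absNorm (e (.inr p)).asIdeal = Ideal.absNorm p.1.asIdeal) : False := by
  classical
  have := hS.to_subtype
  let wS : ℝ → S → ℝ≥0∞ := fun s p ↦ primeWeight L s p
  let wS' : ℝ → ↥Sᶜ → ℝ≥0∞ := fun s p ↦ primeWeight L s p
  -- the Euler factors at `S` for `s ≥ 1` are bounded by their values at `s = 1`
  set C := eulerSum (wS 1) with hC
  have hC' : C ≠ ⊤ := by
    refine eulerSum_ne_top _ fun p ↦ ?_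
    simp only [wS, primeWeight, ENNReal.rpow_neg_one, ENNReal.inv_lt_one]
    exact_mod_cast HeightOneSpectrum.one_lt_absNorm p.1
  have h1 : ∀ s, 1 < s → eulerSum (primeWeight L s) ≤ C * eulerSum (wS' s) := by
    intro s hs
    rw [← eulerSum_comp_equiv _ (Equiv.Set.sumCompl S)]
    have : primeWeight L s ∘ Equiv.Set.sumCompl S = Sum.elim (wS s) (wS' s) := by
      ext (p | p) <;> simp [wS, wS']
    rw [this, eulerSum_sum]
    gcongr
    refine eulerSum_mono fun p ↦ ?_
    simp only [wS, primeWeight]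
    refine ENNReal.rpow_le_rpow_of_exponent_le ?_ (by linarith)
    exact_mod_cast (HeightOneSpectrum.one_lt_absNorm p.1).le
  have h2 : ∀ s, eulerSum (wS' s) * eulerSum (wS' s) ≤ eulerSum (primeWeight M s) := by
    intro s
    rw [← eulerSum_sum]
    refine le_of_eq_of_le ?_ (eulerSum_comp_le _ he)
    congr 1
    ext (p | p) <;> simp [wS', primeWeight, hl, hr]
  have hL := tendsto_eulerSum_primeWeight L
  have hM := tendsto_eulerSum_primeWeight M
  set ρL := ENNReal.ofReal (dedekindZeta_residue L)
  have hL2 := ENNReal.Tendsto.mul hL (.inr ENNReal.ofReal_ne_top) hL (.inr ENNReal.ofReal_ne_top)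
  have h0 : Tendsto (fun s : ℝ ↦ C * C * ENNReal.ofReal (s - 1)) (𝓝[>] 1) (𝓝 0) := by
    have : Tendsto (fun s : ℝ ↦ ENNReal.ofReal (s - 1)) (𝓝[>] 1) (𝓝 0) := by
      have : Tendsto (fun s : ℝ ↦ ENNReal.ofReal (s - 1)) (𝓝 1) (𝓝 (ENNReal.ofReal (1 - 1))) :=
        (ENNReal.continuous_ofReal.comp (continuous_id.sub continuous_const)).tendsto 1
      simpa using this.mono_left nhdsWithin_le_nhds
    simpa using ENNReal.Tendsto.const_mul this (.inr (ENNReal.mul_ne_top hC' hC'))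
  have hR := ENNReal.Tendsto.mul h0 (.inr ENNReal.ofReal_ne_top) hM (.inr ENNReal.zero_ne_top)
  have hle := le_of_tendsto_of_tendsto hL2 hR <| by
    filter_upwards [self_mem_nhdsWithin] with s hs
    calc _ ≤ (ENNReal.ofReal (s - 1) * (C * eulerSum (wS' s))) *
          (ENNReal.ofReal (s - 1) * (C * eulerSum (wS' s))) := by
          gcongr <;> exact h1 s hs
      _ = C * C * ENNReal.ofReal (s - 1) * (ENNReal.ofReal (s - 1) *
          (eulerSum (wS' s) * eulerSum (wS' s))) := by ring
      _ ≤ _ := by gcongr; exact h2 s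
  rw [zero_mul, nonpos_iff_eq_zero, mul_self_eq_zero, ENNReal.ofReal_eq_zero] at hle
  exact hle.not_gt (dedekindZeta_residue_pos L)
/-! ### Quadratic and multiquadratic extensions -/

section
open Polynomial
/-- The field `K(√a)` for a nonsquare `a`, with the conjugation `√a ↦ -√a`. -/
lemma exists_quadratic (K : Type u) [Field K] [NumberField K] {a : K} (ha : ¬ IsSquare a) :
    ∃ (M : Type u) (_ : Field M) (_ : NumberField M) (_ : Algebra K M) (r : M) (σ : M →ₐ[K] M),
      r ^ 2 = algebraMap K M a ∧ σ r = -r ∧ Module.finrank K M = 2 ∧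
      ∀ x, ∃ b c : K, x = algebraMap K M b + algebraMap K M c * r := by
  have hirr : Irreducible (X ^ 2 - C a) :=
    X_pow_sub_C_irreducible_of_prime Nat.prime_two fun b hb ↦ ha ⟨b, by rw [← hb, sq]⟩
  have : Fact (Irreducible (X ^ 2 - C a)) := ⟨hirr⟩
  have hmon : (X ^ 2 - C a).Monic := monic_X_pow_sub_C a two_ne_zero
  have hdeg : (X ^ 2 - C a).natDegree = 2 := natDegree_X_pow_sub_C
  let M := AdjoinRoot (X ^ 2 - C a)
  have hfin : Module.Finite K M := hmon.finite_adjoinRoot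
  have hr : (AdjoinRoot.root (X ^ 2 - C a)) ^ 2 = algebraMap K M a := by
    have := AdjoinRoot.eval₂_root (X ^ 2 - C a)
    rw [eval₂_sub, eval₂_X_pow, eval₂_C, sub_eq_zero] at this
    exact this
  let σ : M →ₐ[K] M := AdjoinRoot.liftAlgHom _ (Algebra.ofId K M) (-AdjoinRoot.root (X ^ 2 - C a))
    (by simp [hr])
  refine ⟨M, inferInstance, NumberField.of_module_finite K M, inferInstance,
    AdjoinRoot.root (X ^ 2 - C a), σ, hr, ?_, ?_, ?_⟩
  · exact AdjoinRoot.liftAlgHom_root ..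
  · rw [(AdjoinRoot.powerBasis hmon.ne_zero).finrank, AdjoinRoot.powerBasis_dim, hdeg]
  · intro x
    obtain ⟨g, rfl⟩ := AdjoinRoot.mk_surjective x
    have h1 : (g %ₘ (X ^ 2 - C a)).natDegree ≤ 1 := by
      have := natDegree_modByMonic_lt g hmon (by intro h; simp [h] at hdeg)
      omega
    obtain ⟨c, b, hg⟩ := exists_eq_X_add_C_of_natDegree_le_one h1
    refine ⟨b, c, ?_⟩
    have h2 : AdjoinRoot.mk (X ^ 2 - C a) g = AdjoinRoot.mk _ (g %ₘ (X ^ 2 - C a)) := by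
      rw [AdjoinRoot.mk_eq_mk]
      exact ⟨g /ₘ (X ^ 2 - C a), by linear_combination -modByMonic_add_div g (X ^ 2 - C a)⟩
    rw [h2, hg, map_add, map_mul, AdjoinRoot.mk_X, AdjoinRoot.mk_C, AdjoinRoot.mk_C, add_comm]
    rfl

end

/-- If `α` is independent modulo squares of the `ε i` with `i ∈ s`, it remains a nonsquare in some
number field containing the square roots of these `ε i`. The `ε i` need not be independent of one
another, so the induction splits according to whether `ε k` is already a square. -/
lemma exists_multiquadratic {ι : Type*} [DecidableEq ι] (s : Finset ι) :
    ∀ (F : Type u) [Field F] [NumberField F] (ε : ι → F) (α : F), (∀ i, ε i ≠ 0) →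
      (∀ T ⊆ s, ¬ IsSquare (α * ∏ i ∈ T, ε i)) →
      ∃ (L : Type u) (_ : Field L) (_ : NumberField L) (φ : F →+* L),
        (∀ k ∈ s, IsSquare (φ (ε k))) ∧ ¬ IsSquare (φ α) := by
  induction s using Finset.induction_on with
  | empty => 
    intro F _ _ ε α _ h
    exact ⟨F, inferInstance, inferInstance, RingHom.id F, by simp, by simpa using h ∅ subset_rfl⟩
  | insert k s hk ih =>
    intro F _ _ ε α h0 h
    by_cases hsq : IsSquare (ε k)
    · obtain ⟨L, i1, i2, φ, h1, h2⟩ := ih F ε α h0 fun T hT ↦ h T (hT.trans (Finset.subset_insert _ _))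
      refine ⟨L, i1, i2, φ, ?_, h2⟩
      intro j hj
      rcases Finset.mem_insert.1 hj with rfl | hj
      · exact hsq.map φ
      · exact h1 j hj
    obtain ⟨M, _, _, _, r, σ, hr, hσ, -, hspan⟩ := exists_quadratic F hsq
    have hinj := (algebraMap F M).injective
    have hεk : IsSquare (algebraMap F M (ε k)) := ⟨r, by rw [← hr, sq]⟩
    -- if `x = (b + c * r) ^ 2` lies in `F` then `b * c = 0`
    have key : ∀ x : F, IsSquare (algebraMap F M x) → IsSquare x ∨ IsSquare (x * ε k) := by
      rintro x ⟨y, hy⟩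
      obtain ⟨b, c, rfl⟩ := hspan y
      have hy' := congrArg σ hy
      simp only [map_mul, map_add, AlgHom.commutes, hσ] at hy'
      have hr0 : r ≠ 0 := by
        rintro rfl
        have := h0 k
        rw [zero_pow two_ne_zero, eq_comm, map_eq_zero] at hr
        exact this hr
      have h4 : algebraMap F M b * algebraMap F M c = 0 := by
        have h3 : (4 * r) * (algebraMap F M b * algebraMap F M c) = 0 := by linear_combination hy' - hy
        have : (4 * r) ≠ 0 := mul_ne_zero (by norm_num) hr0
        exact (mul_eq_zero.1 h3).resolve_left this
      rw [mul_eq_zero, map_eq_zero, map_eq_zero] at h4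
      rcases h4 with rfl | rfl
      · right
        refine ⟨c * ε k, hinj ?_⟩
        simp only [map_mul, hy, ← hr, map_zero]
        ring
      · left
        refine ⟨b, hinj ?_⟩
        rw [hy]; simp
    obtain ⟨L, i1, i2, φ, h1, h2⟩ := ih M (fun i ↦ algebraMap F M (ε i)) (algebraMap F M α)
      (fun i ↦ by simpa using h0 i) fun T hT hs ↦ by
        rw [← map_prod, ← map_mul] at hs
        rcases key _ hs with hs | hs
        · exact h T (hT.trans (Finset.subset_insert _ _)) hs
        · refine h (insert k T) (Finset.insert_subset_insert _ hT) ?_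
          rwa [Finset.prod_insert (fun hkT ↦ hk (hT hkT)), mul_comm (ε k), ← mul_assoc]
    refine ⟨L, i1, i2, φ.comp (algebraMap F M), ?_, h2⟩
    intro j hj
    rcases Finset.mem_insert.1 hj with rfl | hj
    · exact hεk.map φ
    · exact h1 j hj

/-! ### Primes modulo which a nonsquare is not a square -/

section
variable {A B : Type*} [CommRing A] [CommRing B] [Algebra A B] [Algebra.IsIntegral A B]
  [FaithfulSMul A B]

/-- If `a ≡ c ^ 2` modulo `p`, some maximal ideal above `p` contains `√a - c`. -/
lemma exists_isMaximal_sub_mem (σ : B →ₐ[A] B) {a c : A} {r : B} (hr : r ^ 2 = algebraMap A B a)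
    (hσ : σ r = -r) (p : Ideal A) [p.IsMaximal] (h : a - c ^ 2 ∈ p) (h2c : 2 * c ∉ p) :
    ∃ P : Ideal B, P.IsMaximal ∧ P.LiesOver p ∧ r - algebraMap A B c ∈ P := by
  have hne : p.map (algebraMap A B) ⊔ Ideal.span {r - algebraMap A B c} ≠ ⊤ := by
    intro htop
    -- `(r - c) * (r + c) = a - c ^ 2` lies in the extension of `p`, and `r - c` is invertible modulo it
    have h1 : r + algebraMap A B c ∈ p.map (algebraMap A B) := by
      obtain ⟨x, hx, y, hy, hxy⟩ := Submodule.mem_sup.1 ((Ideal.eq_top_iff_one _).1 htop)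
      obtain ⟨z, rfl⟩ := Ideal.mem_span_singleton'.1 hy
      have h2 : r + algebraMap A B c =
          (r + algebraMap A B c) * x + z * algebraMap A B (a - c ^ 2) := by
        rw [map_sub, map_pow, ← hr]
        linear_combination -(r + algebraMap A B c) * hxy
      rw [h2]
      exact Ideal.add_mem _ (Ideal.mul_mem_left _ _ hx)
        (Ideal.mul_mem_left _ _ (Ideal.mem_map_of_mem _ h))
    -- the extension of `p` is stable under the conjugation `σ`
    have h3 : σ (r + algebraMap A B c) ∈ p.map (algebraMap A B) := by
      have := Ideal.mem_map_of_mem (σ : B →+* B) h1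
      rwa [Ideal.map_map, AlgHom.comp_algebraMap] at this
    have h4 : algebraMap A B (2 * c) ∈ p.map (algebraMap A B) := by
      convert Ideal.add_mem _ h1 h3 using 1
      rw [map_add, hσ, AlgHom.commutes, map_mul, map_ofNat]
      ring
    obtain ⟨Q, hQ, hQp⟩ := Ideal.exists_maximal_ideal_liesOver_of_isIntegral (S := B) p
    refine h2c ?_
    rw [hQp.over]
    exact (Ideal.map_le_iff_le_comap.2 hQp.over.le) h4
  obtain ⟨P, hP, hle⟩ := Ideal.exists_le_maximal _ hne
  have hp : p = P.under A := by
    refine Ideal.IsMaximal.eq_of_le ‹_› (Ideal.comap_ne_top _ hP.ne_top) ?_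
    exact Ideal.map_le_iff_le_comap.1 (le_sup_left.trans hle)
  exact ⟨P, hP, ⟨hp⟩, hle (Ideal.mem_sup_right (Ideal.mem_span_singleton_self _))⟩
end

/-- If `a` is a square modulo `p`, prime to `2 * a`, then `p` splits in `L(√a)`: with `a ≡ c ^ 2`, there
are primes containing `√a - c` and `√a + c`, distinct as `2 * c ∉ p`, and the product of their norms
divides `N(p) ^ 2`. -/
lemma exists_split {L M : Type*} [Field L] [NumberField L] [Field M] [NumberField M] [Algebra L M]
    (hM : Module.finrank L M = 2) (σ : M →ₐ[L] M) {r : M} (hσ : σ r = -r) {a : 𝓞 L}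
    (hr : r ^ 2 = algebraMap L M a) (p : HeightOneSpectrum (𝓞 L)) {c : 𝓞 L}
    (h2 : 2 * a ∉ p.asIdeal) (h : a - c ^ 2 ∈ p.asIdeal) :
    ∃ P P' : HeightOneSpectrum (𝓞 M), P ≠ P' ∧
      P.asIdeal.LiesOver p.asIdeal ∧ P'.asIdeal.LiesOver p.asIdeal ∧
      Ideal.absNorm P.asIdeal = Ideal.absNorm p.asIdeal ∧
      Ideal.absNorm P'.asIdeal = Ideal.absNorm p.asIdeal := by
  have hp := p.isPrime
  have hpm : p.asIdeal.IsMaximal := p.isMaximal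
  have h2c : 2 * c ∉ p.asIdeal := fun hc ↦ h2 <| by
    convert Ideal.add_mem _ (Ideal.mul_mem_left _ 2 h) (Ideal.mul_mem_left _ c hc) using 1
    ring
  have hri : IsIntegral ℤ r := by
    refine IsIntegral.of_pow two_pos ?_
    rw [hr]
    exact a.2.algebraMap
  let r' : 𝓞 M := ⟨r, hri⟩
  have hr' : r' ^ 2 = algebraMap (𝓞 L) (𝓞 M) a := RingOfIntegers.ext hr
  let σ' : 𝓞 M →ₐ[𝓞 L] 𝓞 M := RingOfIntegers.mapAlgHom σ
  have hσ' : σ' r' = -r' := RingOfIntegers.ext hσ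
  obtain ⟨P, hP, hPp, hPr⟩ := exists_isMaximal_sub_mem σ' hr' hσ' p.asIdeal h h2c
  obtain ⟨P', hP', hPp', hPr'⟩ := exists_isMaximal_sub_mem σ' hr' hσ' p.asIdeal (c := -c)
    (by rwa [neg_sq]) (by rwa [mul_neg, neg_mem_iff])
  have hne : P ≠ P' := by
    rintro rfl
    refine h2c ?_
    rw [hPp.over]
    change algebraMap (𝓞 L) (𝓞 M) (2 * c) ∈ P
    convert Ideal.sub_mem _ hPr' hPr using 1
    rw [map_neg, map_mul, map_ofNat]
    ring
  have hP0 : P ≠ ⊥ := Ideal.ne_bot_of_liesOver_of_ne_bot p.ne_bot P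
  have hP0' : P' ≠ ⊥ := Ideal.ne_bot_of_liesOver_of_ne_bot p.ne_bot P'
  have hN : Ideal.absNorm P * Ideal.absNorm P' ∣ Ideal.absNorm p.asIdeal ^ 2 := by
    rw [← hM, IsFractionRing.finrank_eq (𝓞 L) L (𝓞 M) M, ← Ideal.absNorm_algebraMap, ← map_mul]
    refine Ideal.absNorm_dvd_absNorm_of_le ?_
    rw [Ideal.mul_eq_inf_of_isCoprime (Ideal.isCoprime_of_isMaximal hne)]
    exact le_inf (Ideal.map_le_iff_le_comap.2 hPp.over.le)
      (Ideal.map_le_iff_le_comap.2 hPp'.over.le)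
  have hp1 := HeightOneSpectrum.one_lt_absNorm p
  rw [Ideal.absNorm_eq_pow_inertiaDeg'_of_liesOver P p.asIdeal hp p.ne_bot,
    Ideal.absNorm_eq_pow_inertiaDeg'_of_liesOver P' p.asIdeal hp p.ne_bot, ← pow_add,
    Nat.pow_dvd_pow_iff_le_right hp1] at hN
  have hf := Ideal.inertiaDeg'_ne_zero p.asIdeal P
  have hf' := Ideal.inertiaDeg'_ne_zero p.asIdeal P'
  have e1 : p.asIdeal.inertiaDeg' P = 1 := by omega
  have e2 : p.asIdeal.inertiaDeg' P' = 1 := by omega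
  refine ⟨⟨P, hP.isPrime, hP0⟩, ⟨P', hP'.isPrime, hP0'⟩, fun h ↦ hne (congrArg HeightOneSpectrum.asIdeal h),
    hPp, hPp',
    ?_, ?_⟩
  · simp only
    rw [Ideal.absNorm_eq_pow_inertiaDeg'_of_liesOver P p.asIdeal hp p.ne_bot, e1, pow_one]
  · simp only
    rw [Ideal.absNorm_eq_pow_inertiaDeg'_of_liesOver P' p.asIdeal hp p.ne_bot, e2, pow_one]

lemma finite_setOf_mem {R : Type*} [CommRing R] [IsDedekindDomain R] {b : R} (hb : b ≠ 0) :
    {v : HeightOneSpectrum R | b ∈ v.asIdeal}.Finite := by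
  have h : Ideal.span {b} ≠ 0 := by simpa using hb
  refine (Ideal.finite_factors h).subset fun v hv ↦ ?_
  exact (Ideal.dvd_span_singleton).2 hv

/-- A nonsquare of `L` is a nonsquare modulo some prime not containing a given nonzero `b`. -/
lemma exists_prime_nonsquare (L : Type u) [Field L] [NumberField L] {a b : 𝓞 L}
    (ha : ¬ IsSquare (a : L)) (hb : b ≠ 0) :
    ∃ v : HeightOneSpectrum (𝓞 L), b ∉ v.asIdeal ∧ ∀ c, a - c ^ 2 ∉ v.asIdeal := by
  by_contra! hcon
  obtain ⟨M, _, _, _, r, σ, hr, hσ, hM, -⟩ := exists_quadratic L ha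
  have ha0 : a ≠ 0 := by rintro rfl; simp at ha
  let S : Set (HeightOneSpectrum (𝓞 L)) := {v | b * (2 * a) ∈ v.asIdeal}
  have hS : S.Finite := finite_setOf_mem (by simp [ha0, hb])
  have key : ∀ p : ↥Sᶜ, ∃ P P' : HeightOneSpectrum (𝓞 M), P ≠ P' ∧
      P.asIdeal.LiesOver p.1.asIdeal ∧ P'.asIdeal.LiesOver p.1.asIdeal ∧
      Ideal.absNorm P.asIdeal = Ideal.absNorm p.1.asIdeal ∧
      Ideal.absNorm P'.asIdeal = Ideal.absNorm p.1.asIdeal := by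
    rintro ⟨p, hp⟩
    obtain ⟨c, hc⟩ := hcon p fun h ↦ hp (Ideal.mul_mem_right _ _ h)
    exact exists_split hM σ hσ hr p (fun h ↦ hp (Ideal.mul_mem_left _ _ h)) hc
  choose P P' hne hP hP' hN hN' using key
  have hinj : ∀ {p q : ↥Sᶜ} {Q : HeightOneSpectrum (𝓞 M)}, Q.asIdeal.LiesOver p.1.asIdeal →
      Q.asIdeal.LiesOver q.1.asIdeal → p = q := fun h h' ↦
    Subtype.ext (HeightOneSpectrum.ext (h.over.trans h'.over.symm))
  refine no_norm_preserving_doubling L M hS (Sum.elim P P') ?_ hN hN'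
  refine Function.Injective.sumElim (fun p q h ↦ hinj (hP p) (h ▸ hP q))
    (fun p q h ↦ hinj (hP' p) (h ▸ hP' q)) fun p q h ↦ ?_
  obtain rfl := hinj (hP p) (h ▸ hP' q)
  exact hne _ h

/-! ### Descent from the multiquadratic extension -/

lemma isSquare_mul_of_not_isSquare {k : Type*} [Field k] [Finite k] {x y : k}
    (hx : ¬ IsSquare x) (hy : ¬ IsSquare y) : IsSquare (x * y) := by
  classical
  have := Fintype.ofFinite k
  have hk : ringChar k ≠ 2 := fun h ↦ hx (FiniteField.isSquare_of_char_two h x)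
  have hx0 : x ≠ 0 := by rintro rfl; simp at hx
  have hy0 : y ≠ 0 := by rintro rfl; simp at hy
  rw [← quadraticChar_one_iff_isSquare (mul_ne_zero hx0 hy0), map_mul,
    quadraticChar_neg_one_iff_not_isSquare.2 hx, quadraticChar_neg_one_iff_not_isSquare.2 hy]
  norm_num

lemma isSquare_mk_iff {R : Type*} [CommRing R] {I : Ideal R} {a : R} :
    IsSquare (Ideal.Quotient.mk I a) ↔ ∃ c, a - c ^ 2 ∈ I := by
  constructor
  · rintro ⟨x, hx⟩
    obtain ⟨c, rfl⟩ := Ideal.Quotient.mk_surjective x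
    exact ⟨c, Ideal.Quotient.eq.1 (by rw [hx, map_pow, sq])⟩
  · rintro ⟨c, hc⟩
    exact ⟨Ideal.Quotient.mk I c, by rw [Ideal.Quotient.eq.2 hc, map_pow, sq]⟩

/-- Let `x` be a nonsquare modulo `w`, and `y` be a square in `𝓞 L` prime to `w`. Then `y` is a square
modulo the prime of `F` below `w`. -/
lemma exists_sub_sq_mem_under {F L : Type*} [Field F] [NumberField F] [Field L] [NumberField L]
    [Algebra F L] (w : HeightOneSpectrum (𝓞 L)) {x y : 𝓞 F} {z : 𝓞 L}
    (hx : ∀ c, algebraMap (𝓞 F) (𝓞 L) x - c ^ 2 ∉ w.asIdeal)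
    (hz : algebraMap (𝓞 F) (𝓞 L) y = z ^ 2) (hy : algebraMap (𝓞 F) (𝓞 L) y ∉ w.asIdeal) :
    ∃ c, y - c ^ 2 ∈ (w.under (𝓞 F)).asIdeal := by
  set v := w.under (𝓞 F)
  have hw := w.isPrime
  have hwm := w.isMaximal
  have hvm := v.isMaximal
  let := Ideal.Quotient.field v.asIdeal
  let := Ideal.Quotient.field w.asIdeal
  have : Finite (𝓞 F ⧸ v.asIdeal) := Ideal.finiteQuotientOfFreeOfNeBot _ v.ne_bot
  rw [← isSquare_mk_iff]
  by_contra hys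
  have hxs : ¬ IsSquare (Ideal.Quotient.mk v.asIdeal x) := by
    rw [isSquare_mk_iff]
    rintro ⟨c, hc⟩
    refine hx (algebraMap (𝓞 F) (𝓞 L) c) ?_
    rw [← map_pow, ← map_sub]
    exact hc
  have hxy := isSquare_mul_of_not_isSquare hxs hys
  rw [← map_mul, isSquare_mk_iff] at hxy
  obtain ⟨d, hd⟩ := hxy
  have hd' : algebraMap (𝓞 F) (𝓞 L) (x * y - d ^ 2) ∈ w.asIdeal := hd
  have hxy' : IsSquare (Ideal.Quotient.mk w.asIdeal (algebraMap (𝓞 F) (𝓞 L) x * z ^ 2)) := by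
    rw [isSquare_mk_iff]
    refine ⟨algebraMap (𝓞 F) (𝓞 L) d, ?_⟩
    rwa [map_sub, map_mul, map_pow, hz] at hd'
  have hxw : ¬ IsSquare (Ideal.Quotient.mk w.asIdeal (algebraMap (𝓞 F) (𝓞 L) x)) := by
    rw [isSquare_mk_iff]
    push Not
    exact hx
  have hz0 : Ideal.Quotient.mk w.asIdeal z ≠ 0 := by
    rw [Ne, Ideal.Quotient.eq_zero_iff_mem]
    intro h
    refine hy ?_
    rw [hz]
    exact Ideal.pow_mem_of_mem _ h 2 two_pos
  refine hxw ?_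
  rw [map_mul, map_pow] at hxy'
  have := hxy'.mul (IsSquare.sq (Ideal.Quotient.mk w.asIdeal z)⁻¹)
  rwa [mul_assoc, ← mul_pow, mul_inv_cancel₀ hz0, one_pow, mul_one] at this

lemma isSquare_mul_sq_iff {k : Type*} [Field k] {x b : k} (hb : b ≠ 0) :
    IsSquare (x * b ^ 2) ↔ IsSquare x := by
  refine ⟨fun h ↦ ?_, fun h ↦ h.mul (IsSquare.sq b)⟩
  have := h.mul (IsSquare.sq b⁻¹)
  rwa [mul_assoc, ← mul_pow, mul_inv_cancel₀ hb, one_pow, mul_one] at this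

/-- The case of integral `ε i`. -/
theorem infinite_of_integral {F : Type u} [Field F] [NumberField F] {m : ℕ} (ε : Fin m → 𝓞 F)
    (hε0 : ∀ i, ε i ≠ 0)
    (hind : ∀ T : Finset (Fin m), T.Nonempty → ¬ IsSquare (∏ i ∈ T, (ε i : F))) (l : Fin m) :
    {v : HeightOneSpectrum (𝓞 F) |
        ¬ IsSquare (algebraMap F (v.adicCompletion F) (ε l)) ∧
          ∀ k : Fin m, k ≠ l →
            IsSquare (algebraMap F (v.adicCompletion F) (ε k))}.Infinite := by
  intro hfin
  -- a nonzero `b` in every prime of the supposedly finite set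
  obtain ⟨b, hb0, hb⟩ : ∃ b : 𝓞 F, b ≠ 0 ∧ ∀ v ∈ {v : HeightOneSpectrum (𝓞 F) |
        ¬ IsSquare (algebraMap F (v.adicCompletion F) (ε l)) ∧
          ∀ k : Fin m, k ≠ l → IsSquare (algebraMap F (v.adicCompletion F) (ε k))},
        b ∈ v.asIdeal := by
    choose g hg hg0 using fun v : HeightOneSpectrum (𝓞 F) ↦
      Submodule.exists_mem_ne_zero_of_ne_bot v.ne_bot
    refine ⟨∏ v ∈ hfin.toFinset, g v, Finset.prod_ne_zero_iff.2 fun v _ ↦ hg0 v, fun v hv ↦ ?_⟩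
    exact Ideal.mem_of_dvd _ (Finset.dvd_prod_of_mem g (hfin.mem_toFinset.2 hv)) (hg v)
  obtain ⟨L, _, _, φ, hφ, hφl⟩ := exists_multiquadratic (Finset.univ.erase l) F
    (fun i ↦ (ε i : F)) (ε l : F) (fun i ↦ by simpa using hε0 i) fun T hT h ↦ by
      have hlT : l ∉ T := fun hl ↦ by simpa using hT hl
      refine hind (insert l T) (Finset.insert_nonempty _ _) ?_
      rwa [Finset.prod_insert hlT]
  let := φ.toAlgebra
  obtain ⟨w, hwb, hwl⟩ := exists_prime_nonsquare L (a := algebraMap (𝓞 F) (𝓞 L) (ε l))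
    (b := algebraMap (𝓞 F) (𝓞 L) (b * ∏ k, 2 * ε k)) hφl <| by
      rw [Ne, FaithfulSMul.algebraMap_eq_zero_iff]
      simp [hb0, Finset.prod_eq_zero_iff, hε0]
  have hbw : ∀ x, x ∣ b * ∏ k, 2 * ε k → algebraMap (𝓞 F) (𝓞 L) x ∉ w.asIdeal := fun x hx h ↦
    hwb (Ideal.mem_of_dvd _ (map_dvd _ hx) h)
  have h2k : ∀ k, algebraMap (𝓞 F) (𝓞 L) (2 * ε k) ∉ w.asIdeal := fun k ↦
    hbw _ (Dvd.dvd.mul_left (Finset.dvd_prod_of_mem (fun k ↦ 2 * ε k) (Finset.mem_univ k)) b)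
  refine hbw b (Dvd.intro _ rfl) (hb (w.under (𝓞 F)) ⟨?_, fun k hk ↦ ?_⟩)
  · refine not_isSquare_adicCompletion _ fun c hc ↦ hwl (algebraMap (𝓞 F) (𝓞 L) c) ?_
    rw [← map_pow, ← map_sub]
    exact hc
  · obtain ⟨z, hz⟩ := hφ k (by simpa using hk)
    have hzi : IsIntegral ℤ z := by
      refine IsIntegral.of_pow two_pos ?_
      rw [sq, ← hz]
      exact (ε k).2.map φ.toIntAlgHom
    obtain ⟨c, hc⟩ := exists_sub_sq_mem_under w (y := ε k) (z := ⟨z, hzi⟩) hwl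
      (RingOfIntegers.ext (hz.trans (sq z).symm)) fun h ↦ h2k k (by
        rw [map_mul]; exact Ideal.mul_mem_left _ _ h)
    exact isSquare_adicCompletion _ (h2k k) hc

end

/-- Let `F` be a number field and `ε 1, …, ε m ∈ F^×` be multiplicatively
independent modulo squares (no product over a nonempty subset is a square).  Then for each
`l`, the set of finite places `v` of `F` such that `ε l` is not a square in `F_v` while
`ε k` is a square in `F_v` for every `k ≠ l` is infinite. -/
theorem infinite_finitePlaces_nonsquare_at_one_index
    (F : Type*) [Field F] [NumberField F] (m : ℕ) (ε : Fin m → F)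
    (hε0 : ∀ i, ε i ≠ 0)
    (hind : ∀ T : Finset (Fin m), T.Nonempty → ¬ IsSquare (∏ i ∈ T, ε i)) :
    ∀ l : Fin m,
      {v : HeightOneSpectrum (NumberField.RingOfIntegers F) |
        ¬ IsSquare (algebraMap F (v.adicCompletion F) (ε l)) ∧
          ∀ k : Fin m, k ≠ l → IsSquare (algebraMap F (v.adicCompletion F) (ε k))}.Infinite := by
  intro l
  -- clear denominators by squares
  have hden : ∀ i, ∃ x b : NumberField.RingOfIntegers F, b ≠ 0 ∧ (x : F) = ε i * (b : F) ^ 2 := by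
    intro i
    obtain ⟨a, b, hb, h⟩ := IsFractionRing.div_surjective (A := NumberField.RingOfIntegers F) (ε i)
    have hb0 : b ≠ 0 := nonZeroDivisors.ne_zero hb
    have hb' : (b : F) ≠ 0 := by simpa using hb0
    refine ⟨a * b, b, hb0, ?_⟩
    change algebraMap _ F (a * b) = ε i * algebraMap _ F b ^ 2
    rw [← h, map_mul]
    change algebraMap _ F b ≠ 0 at hb'
    field_simp
  choose x b hb0 hx using hden
  have hb0' : ∀ i, (b i : F) ≠ 0 := fun i ↦ by simpa using hb0 i
  have hloc : ∀ (v : HeightOneSpectrum (NumberField.RingOfIntegers F)) i,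
      IsSquare (algebraMap F (v.adicCompletion F) (x i)) ↔
        IsSquare (algebraMap F (v.adicCompletion F) (ε i)) := fun v i ↦ by
    rw [hx, map_mul, map_pow]
    exact isSquare_mul_sq_iff (by simpa using hb0 i)
  have := infinite_of_integral x
    (fun i h ↦ mul_ne_zero (hε0 i) (pow_ne_zero 2 (hb0' i)) (by rw [← hx, h]; exact map_zero (algebraMap _ F)))
    (fun T hT h ↦ hind T hT <| by
      simp only [hx, Finset.prod_mul_distrib, Finset.prod_pow] at h
      exact (isSquare_mul_sq_iff (Finset.prod_ne_zero_iff.2 fun i _ ↦ hb0' i)).1 h) l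
  simpa only [hloc] using this
end

section
/- Let E be a finite multiset of positive integers, let s ≥ 0, and let m_1 < m_2 < ⋯ < m_{2s+1} be integers with m_1 ≥ 0. Let q be the partition consisting of two copies of each element of E together with the parts 2m_1+1, 2m_2+1, …, 2m_{2s+1}+1 (a partition of an odd integer 2n+1), and let p_2 be the partition consisting of two copies of each element of E together with the parts of the Sp-collapse of [(2m_{2s+1}+1)(2m_{2s}+1)⋯(2m_2+1)] and, if m_1 > 0, one additional part 2m_1 (for s = 0 the Sp-collapse factor is the empty partition). Then the Sp-collapse of the transpose of p_2 equals the transpose of the Sp-collapse of q^−; that is, ((p_2)^t)_{Sp} = ((q^−)_{Sp})^t = η(q). -/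
/-!
Write `S p k` for the sum of the `k` largest parts of `p` and `H p t` for the sum of the excesses
`a - t` over the parts `a > t`. These are Legendre dual to each other (`S_le`, `S_eq`), `H` is
additive under union of multisets, and `S (transposeP p) t = p.sum - H p t` (`S_transposeP`); hence
transposition reverses dominance, and a bounded loss in partial sums survives adding common parts.

Two facts reduce the problem to parities of partial sums.

* The Sp-collapse lowers the `k`-th partial sum by `1` if that sum is odd and the parts number `k`
  and `k + 1` are not equal and odd, and by `0` otherwise (`S_collapse`). This rests on the fact that
  a partition is symplectic iff its partial sum is even at each descent.
* The transpose of `d` is symplectic iff all partial sums of `d` over an even number of parts are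
  even (`isSymplectic_iff_transposeP`).

The partition `q` is orthogonal, so its `k`-th partial sum has the parity of `k` except inside runs
of equal even parts (`S_parity`). With the formula for the collapse `d` of `q⁻`, this shows that the
transpose of `d` is symplectic (`even_S_dual`), and that `d` is the least partition with this
property whose partial sums are at least those of `q` minus `1` (`S_dual_le`): at even positions this
is a parity statement, and at odd positions where the collapse loses nothing it follows from concavity
of partial sums.

Finally `S q k - 1 ≤ S p₂ k ≤ S q k` (`H_add_le_collapse` gives the lower bound). The upper bound
gives `p₂ ≤ q⁻`, so `p₂ ≤ d` as `p₂` is symplectic, and the transpose of `d` lies below that of `p₂`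
and so below its collapse `c`. The lower bound applies to the transpose of `c`, which dominates `p₂`,
and the minimality of `d` then shows that `c` lies below the transpose of `d`.
-/

/-- The sum of the `k` largest elements of a multiset of natural numbers. -/
def Multiset.topSum (p : Multiset ℕ) (k : ℕ) : ℕ :=
  (((p.sort (· ≤ ·)).reverse).take k).sum

/-- Dominance order on partitions (finite multisets of positive integers) of the same
number: `Dominates p q` means `p` and `q` partition the same integer and, for every `k`,
the sum of the `k` largest parts of `p` is at least that of `q`. -/
def Dominates (p q : Multiset ℕ) : Prop :=
  p.sum = q.sum ∧ ∀ k, q.topSum k ≤ p.topSum k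

/-- A partition is symplectic if each of its odd parts occurs with even multiplicity. -/
def IsSymplectic (p : Multiset ℕ) : Prop :=
  ∀ a, Odd a → Even (p.count a)

/-- The transpose of a partition: the `i`-th part (for `i ≥ 1`) is the number of parts
that are `≥ i`; zero parts are discarded. -/
def transposeP (p : Multiset ℕ) : Multiset ℕ :=
  ((Multiset.range p.sum).map fun i => (p.filter fun a => i + 1 ≤ a).card).filter (0 < ·)

/-- `qminus q` is `q⁻`: one occurrence of the smallest part `a` of `q` is replaced by
`a - 1` (deleted if `a = 1`). -/
def qminus (q : Multiset ℕ) : Multiset ℕ :=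
  match (q.sort (· ≤ ·)).head? with
  | none => 0
  | some a => if a ≤ 1 then q.erase a else (a - 1) ::ₘ q.erase a

/-- `IsSpCollapse p c` : `c` is the Sp-collapse of `p`, i.e. the greatest symplectic
partition dominated by `p` in the dominance order. -/
def IsSpCollapse (p c : Multiset ℕ) : Prop :=
  0 ∉ c ∧ IsSymplectic c ∧ Dominates p c ∧
    ∀ q : Multiset ℕ, 0 ∉ q → IsSymplectic q → Dominates p q → Dominates c q

/-- A symplectic partition is special if it has an even number of even parts between any
two consecutive (distinct) odd parts, and an even number of even parts greater than its
largest odd part. -/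
def IsSpecial (p : Multiset ℕ) : Prop :=
  IsSymplectic p ∧
    (∀ a b, a ∈ p → b ∈ p → Odd a → Odd b → a < b →
        (∀ c ∈ p, Odd c → ¬(a < c ∧ c < b)) →
        Even ((p.filter fun x => Even x ∧ a < x ∧ x < b).card)) ∧
    (∀ a, a ∈ p → Odd a → (∀ c ∈ p, Odd c → c ≤ a) →
        Even ((p.filter fun x => Even x ∧ a < x).card))

/-- `IsSpExpansion p e` : `e` is the Sp-expansion of `p`, i.e. the smallest special
symplectic partition dominating `p` in the dominance order. -/
def IsSpExpansion (p e : Multiset ℕ) : Prop :=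
  0 ∉ e ∧ IsSpecial e ∧ Dominates e p ∧
    ∀ q : Multiset ℕ, 0 ∉ q → IsSpecial q → Dominates q p → Dominates q e

namespace SpDual

/-! ### Sequences of parts and partial sums -/

/-- The `i`-th largest part of `p`, indexed from `0`, and `0` beyond the last part. -/
def part (p : Multiset ℕ) (i : ℕ) : ℕ := ((p.sort (· ≤ ·)).reverse).getD i 0

/-- The sum of the `k` largest parts, as a sum over the sequence of parts. -/
def S (p : Multiset ℕ) (k : ℕ) : ℕ := ∑ i ∈ Finset.range k, part p i

/-- The sum of the excesses of the parts over `t`; truncated subtraction is intended. -/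
def H (p : Multiset ℕ) (t : ℕ) : ℕ := (p.map fun a => a - t).sum

lemma list_take_sum (l : List ℕ) (k : ℕ) :
    (l.take k).sum = ∑ i ∈ Finset.range k, l.getD i 0 := by
  induction l generalizing k with
  | nil => simp
  | cons a l ih =>
    cases k with
    | zero => simp
    | succ k => rw [Finset.sum_range_succ']; simp [ih, add_comm]

lemma list_map_sum (φ : ℕ → ℕ) (h0 : φ 0 = 0) (l : List ℕ) (N : ℕ) (hN : l.length ≤ N) :
    (l.map φ).sum = ∑ i ∈ Finset.range N, φ (l.getD i 0) := by
  induction l generalizing N with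
  | nil => simp [h0]
  | cons a l ih =>
    cases N with
    | zero => simp at hN
    | succ N =>
      rw [Finset.sum_range_succ']
      simp at hN
      simp [ih N hN, add_comm]

lemma topSum_eq (p : Multiset ℕ) (k : ℕ) : p.topSum k = S p k := list_take_sum _ _

lemma map_sum (p : Multiset ℕ) (φ : ℕ → ℕ) (h0 : φ 0 = 0) (N : ℕ) (hN : p.card ≤ N) :
    (p.map φ).sum = ∑ i ∈ Finset.range N, φ (part p i) := by
  have h := list_map_sum φ h0 (p.sort (· ≤ ·)).reverse N (by simpa using hN)
  unfold part
  rw [← h]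
  conv_lhs => rw [← Multiset.sort_eq p (· ≤ ·)]
  rw [Multiset.map_coe, Multiset.sum_coe, List.map_reverse, List.sum_reverse]

lemma part_antitone (p : Multiset ℕ) : Antitone (part p) := by
  intro i j hij
  unfold part
  have hs : ((p.sort (· ≤ ·)).reverse).Pairwise (· ≥ ·) := by
    rw [List.pairwise_reverse]
    exact p.pairwise_sort (· ≤ ·)
  generalize (p.sort (· ≤ ·)).reverse = l at hs
  rcases hij.eq_or_lt with rfl | hij
  · exact le_rfl
  by_cases hj : j < l.length
  · rw [List.getD_eq_getElem _ _ hj, List.getD_eq_getElem _ _ (hij.trans hj)]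
    exact List.pairwise_iff_getElem.1 hs i j _ _ hij
  · rw [List.getD_eq_default _ _ (not_lt.1 hj)]
    exact Nat.zero_le _

lemma part_zero_of_card_le (p : Multiset ℕ) {i : ℕ} (h : p.card ≤ i) : part p i = 0 :=
  List.getD_eq_default _ _ (by simpa using h)

lemma S_zero (p : Multiset ℕ) : S p 0 = 0 := by simp [S]

lemma S_succ (p : Multiset ℕ) (k : ℕ) : S p (k + 1) = S p k + part p k :=
  Finset.sum_range_succ _ _

lemma S_eq_sum (p : Multiset ℕ) {k : ℕ} (h : p.card ≤ k) : S p k = p.sum := by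
  simpa [S] using (map_sum p id rfl k h).symm

lemma S_mono (p : Multiset ℕ) : Monotone (S p) :=
  monotone_nat_of_le_succ fun k => by rw [S_succ]; omega

lemma S_le_sum (p : Multiset ℕ) (k : ℕ) : S p k ≤ p.sum := by
  rw [← S_eq_sum p (le_max_left p.card k)]
  exact S_mono p (le_max_right _ _)

lemma dominates_iff (p q : Multiset ℕ) :
    Dominates p q ↔ p.sum = q.sum ∧ ∀ k, S q k ≤ S p k := by
  simp [Dominates, topSum_eq]

/-- The superlevel sets of an antitone sequence are initial segments, hence determined by
their cardinality. -/
lemma lt_card_iff (f : ℕ → ℕ) (hf : Antitone f) (N : ℕ) (hN : ∀ i, N ≤ i → f i = 0)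
    (v i : ℕ) (hv : 0 < v) :
    i < ((Finset.range N).filter fun j => v ≤ f j).card ↔ v ≤ f i := by
  constructor
  · intro h
    by_contra! hlt
    have hsub : ((Finset.range N).filter fun j => v ≤ f j) ⊆ Finset.range i := by
      intro j hj
      rw [Finset.mem_filter] at hj
      rw [Finset.mem_range]
      by_contra! hij
      have := hf hij
      omega
    have := Finset.card_le_card hsub
    rw [Finset.card_range] at this
    omega
  · intro h
    have hsub : Finset.range (i + 1) ⊆ ((Finset.range N).filter fun j => v ≤ f j) := by
      intro j hj
      rw [Finset.mem_range] at hj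
      have h1 : f i ≤ f j := hf (by omega)
      rw [Finset.mem_filter, Finset.mem_range]
      refine ⟨?_, by omega⟩
      by_contra! hjN
      have := hN j hjN
      omega
    have := Finset.card_le_card hsub
    rw [Finset.card_range] at this
    omega

lemma card_filter_eq (p : Multiset ℕ) (P : ℕ → Prop) [DecidablePred P] :
    (p.filter P).card = (p.map fun a => if P a then 1 else 0).sum := by
  induction p using Multiset.induction_on with
  | empty => simp
  | cons a p ih => by_cases h : P a <;> simp [h, ih, add_comm]

lemma lt_card_filter_iff (p : Multiset ℕ) (v i : ℕ) (hv : 0 < v) :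
    i < (p.filter fun a => v ≤ a).card ↔ v ≤ part p i := by
  rw [card_filter_eq, map_sum p _ (by simp; omega) p.card le_rfl, ← Finset.card_filter]
  exact lt_card_iff _ (part_antitone p) _ (fun i => part_zero_of_card_le p) v i hv

/-- An antitone sequence whose nonzero values are, with multiplicity, those of `p` is the
sequence of parts of `p`. -/
lemma part_eq (p : Multiset ℕ) (f : ℕ → ℕ) (hf : Antitone f) (N : ℕ)
    (hN : ∀ i, N ≤ i → f i = 0)
    (h : ∀ φ : ℕ → ℕ, φ 0 = 0 → (p.map φ).sum = ∑ i ∈ Finset.range N, φ (f i)) :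
    part p = f := by
  have key : ∀ v i, 0 < v → (v ≤ part p i ↔ v ≤ f i) := by
    intro v i hv
    rw [← lt_card_filter_iff p v i hv, ← lt_card_iff f hf N hN v i hv, card_filter_eq,
      h _ (by simp; omega), Finset.card_filter]
  funext i
  apply le_antisymm
  · rcases Nat.eq_zero_or_pos (part p i) with h0 | h0
    · omega
    · exact (key _ i h0).1 le_rfl
  · rcases Nat.eq_zero_or_pos (f i) with h0 | h0
    · omega
    · exact (key _ i h0).2 le_rfl

lemma eq_of_part_eq {p q : Multiset ℕ} (hp : 0 ∉ p) (hq : 0 ∉ q) (h : part p = part q) :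
    p = q := by
  ext a
  rcases Nat.eq_zero_or_pos a with rfl | ha
  · rw [Multiset.count_eq_zero_of_notMem hp, Multiset.count_eq_zero_of_notMem hq]
  · have key : ∀ r : Multiset ℕ, ∀ N, r.card ≤ N →
        r.count a = ∑ i ∈ Finset.range N, if a = part r i then 1 else 0 := by
      intro r N hN
      rw [Multiset.count_eq_card_filter_eq, card_filter_eq]
      exact map_sum r _ (by simp; omega) N hN
    rw [key p _ (le_max_left _ q.card), key q _ (le_max_right p.card _), h]

lemma eq_of_S_eq {p q : Multiset ℕ} (hp : 0 ∉ p) (hq : 0 ∉ q) (h : ∀ k, S p k = S q k) :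
    p = q := by
  apply eq_of_part_eq hp hq
  funext i
  have h1 := h (i + 1)
  rw [S_succ, S_succ, h i] at h1
  omega

/-- The multiset of nonzero values of an antitone, eventually zero sequence. -/
def ofSeq (f : ℕ → ℕ) (N : ℕ) : Multiset ℕ := ((Multiset.range N).map f).filter (0 < ·)

lemma zero_notMem_ofSeq (f : ℕ → ℕ) (N : ℕ) : 0 ∉ ofSeq f N := by simp [ofSeq]

lemma part_ofSeq (f : ℕ → ℕ) (hf : Antitone f) (N : ℕ) (hN : ∀ i, N ≤ i → f i = 0) :
    part (ofSeq f N) = f := by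
  apply part_eq _ f hf N hN
  intro φ h0
  have : ∀ p : Multiset ℕ, ((p.filter (0 < ·)).map φ).sum = (p.map φ).sum := by
    intro p
    induction p using Multiset.induction_on with
    | empty => simp
    | cons a p ih =>
      rcases Nat.eq_zero_or_pos a with rfl | ha
      · simp [h0, ih]
      · simp [ha, ih]
  rw [ofSeq, this, Multiset.map_map]
  rfl

/-! ### Transposition -/

lemma le_sum_of_mem {p : Multiset ℕ} {a : ℕ} (h : a ∈ p) : a ≤ p.sum :=
  Multiset.single_le_sum (by simp) a h

lemma part_transposeP (p : Multiset ℕ) (j : ℕ) :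
    part (transposeP p) j = (p.filter fun a => j + 1 ≤ a).card := by
  have := part_ofSeq (fun i => (p.filter fun a => i + 1 ≤ a).card) ?_ p.sum ?_
  · exact congrFun this j
  · intro i j hij
    apply Multiset.card_le_card
    apply Multiset.monotone_filter_right
    intro a ha
    omega
  · intro i hi
    simp only [Multiset.card_eq_zero, Multiset.filter_eq_nil]
    intro a ha
    have := le_sum_of_mem ha
    omega

/-- Transposition as a Galois connection: both sides say that the box in row `i`, column `j` of
the Young diagram of `p` is present. -/
lemma lt_part_transposeP (p : Multiset ℕ) (i j : ℕ) :
    i < part (transposeP p) j ↔ j < part p i := by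
  rw [part_transposeP, lt_card_filter_iff p _ _ (by omega)]
  omega

lemma part_transposeP_transposeP (p : Multiset ℕ) : part (transposeP (transposeP p)) = part p := by
  funext i
  have key : ∀ j, j < part (transposeP (transposeP p)) i ↔ j < part p i := fun j => by
    rw [lt_part_transposeP, lt_part_transposeP]
  have h1 := key (part p i)
  have h2 := key (part (transposeP (transposeP p)) i)
  omega

lemma S_transposeP (p : Multiset ℕ) (t : ℕ) : S (transposeP p) t + H p t = p.sum := by
  induction t with
  | zero => simp [S, H]
  | succ t ih =>
    rw [S_succ, part_transposeP, card_filter_eq, ← ih, add_assoc]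
    congr 1
    unfold H
    rw [← Multiset.sum_map_add]
    congr 1
    apply Multiset.map_congr rfl
    intro a _
    split_ifs <;> omega

lemma H_eq_zero {p : Multiset ℕ} {t : ℕ} (h : p.sum ≤ t) : H p t = 0 := by
  unfold H
  rw [Multiset.sum_eq_zero_iff]
  intro x hx
  rw [Multiset.mem_map] at hx
  obtain ⟨a, ha, rfl⟩ := hx
  have := le_sum_of_mem ha
  omega

lemma sum_transposeP (p : Multiset ℕ) : (transposeP p).sum = p.sum := by
  have h := S_transposeP p (max (transposeP p).card p.sum)
  rw [S_eq_sum _ (le_max_left _ _), H_eq_zero (le_max_right _ _)] at h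
  omega

lemma S_add_H_transposeP (p : Multiset ℕ) (t : ℕ) : S p t + H (transposeP p) t = p.sum := by
  have h := S_transposeP (transposeP p) t
  rw [sum_transposeP] at h
  rw [← h]
  simp only [S, part_transposeP_transposeP]

lemma zero_notMem_transposeP (p : Multiset ℕ) : 0 ∉ transposeP p := by simp [transposeP]

/-! ### Partial sums and excesses are Legendre dual -/

lemma S_le (p : Multiset ℕ) (k t : ℕ) : S p k ≤ k * t + H p t := by
  unfold H
  rw [map_sum p (fun a => a - t) (by simp) _ (le_max_left p.card k)]
  calc S p k ≤ ∑ i ∈ Finset.range k, (t + (part p i - t)) :=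
        Finset.sum_le_sum fun i _ => by omega
    _ = k * t + ∑ i ∈ Finset.range k, (part p i - t) := by
        rw [Finset.sum_add_distrib]; simp
    _ ≤ _ := by
        gcongr
        exact le_max_right _ _

/-- If the first `k` parts are `≥ t` and the others are `≤ t`, the bound `S_le` is sharp. -/
lemma S_eq (p : Multiset ℕ) (k t : ℕ) (h1 : ∀ i, i < k → t ≤ part p i)
    (h2 : ∀ i, k ≤ i → part p i ≤ t) : S p k = k * t + H p t := by
  unfold H
  rw [map_sum p (fun a => a - t) (by simp) _ (le_max_left p.card k)]
  rw [← Finset.sum_subset (Finset.range_subset_range.2 (le_max_right p.card k))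
    (fun i _ hi => by
      have := h2 i (by simpa using hi)
      omega)]
  calc S p k = ∑ i ∈ Finset.range k, (t + (part p i - t)) :=
        Finset.sum_congr rfl fun i hi => by
          have := h1 i (by simpa using hi)
          omega
    _ = _ := by rw [Finset.sum_add_distrib]; simp

lemma exists_t (p : Multiset ℕ) (k : ℕ) : ∃ t, S p k = k * t + H p t :=
  ⟨part p k, S_eq p k _ (fun _ hi => part_antitone p hi.le) fun _ hi => part_antitone p hi⟩

lemma exists_k (p : Multiset ℕ) (t : ℕ) : ∃ k, S p k = k * t + H p t := by
  refine ⟨(p.filter fun a => t + 1 ≤ a).card, S_eq p _ t (fun i hi => ?_) fun i hi => ?_⟩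
  · rw [lt_card_filter_iff p _ _ (by omega)] at hi
    omega
  · by_contra! h
    have := (lt_card_filter_iff p (t + 1) i (by omega)).2 h
    omega

/-- Since `S p k` is the minimum over `t` of `k * t + H p t`, bounds between excess functions pass
to partial sums, with the same error. -/
lemma S_le_of_H_le {p q : Multiset ℕ} (e : ℕ) (h : ∀ t, H q t ≤ H p t + e) (k : ℕ) :
    S q k ≤ S p k + e := by
  obtain ⟨t, ht⟩ := exists_t p k
  have := S_le q k t
  have := h t
  omega

/-- Dually to `S_le_of_H_le`, `H q t` is the maximum over `k` of `S q k - k * t`. -/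
lemma H_le_of_S_le {p q : Multiset ℕ} (e : ℕ) (h : ∀ k, S q k ≤ S p k + e) (t : ℕ) :
    H q t ≤ H p t + e := by
  obtain ⟨k, hk⟩ := exists_k q t
  have := S_le p k t
  have := h k
  omega

lemma H_add (p q : Multiset ℕ) (t : ℕ) : H (p + q) t = H p t + H q t := by simp [H]

/-! ### Symplectic partitions -/

lemma sum_filter_eq (p : Multiset ℕ) (φ : ℕ → ℕ) (v : ℕ) :
    ((p.filter (v ≤ ·)).map φ).sum = (p.map fun a => if v ≤ a then φ a else 0).sum := by
  induction p using Multiset.induction_on with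
  | empty => simp
  | cons a p ih => by_cases h : v ≤ a <;> simp [h, ih]

lemma even_sum_map (p : Multiset ℕ) (φ : ℕ → ℕ) (h : ∀ a, Even (p.count a * φ a)) :
    Even (p.map φ).sum := by
  rw [Finset.sum_multiset_map_count]
  exact Finset.even_sum _ fun a _ => h a

lemma even_sum_of_ge (p : Multiset ℕ) (φ : ℕ → ℕ) (h : ∀ a, Even (p.count a * φ a)) (v : ℕ) :
    Even (p.map fun a => if v ≤ a then φ a else 0).sum := by
  apply even_sum_map
  intro a
  split_ifs
  · exact h a
  · simp

/-- If every value contributes evenly to `∑ φ`, then so do the parts up to a descent. -/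
lemma even_of_descent (p : Multiset ℕ) (φ : ℕ → ℕ) (h : ∀ a, Even (p.count a * φ a)) (k : ℕ)
    (hk : part p (k + 1) < part p k) : Even (∑ i ∈ Finset.range (k + 1), φ (part p i)) := by
  have h1 := even_sum_of_ge p φ h (part p k)
  rw [map_sum p _ (by simp; omega) _ (le_max_left p.card (k + 1)),
    ← Finset.sum_subset (Finset.range_subset_range.2 (le_max_right p.card (k + 1)))] at h1
  · rwa [Finset.sum_congr rfl fun i hi => if_pos (part_antitone p ?_)] at h1
    simp at hi
    omega
  · intro i _ hi
    have : k + 1 ≤ i := by simpa using hi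
    have := part_antitone p this
    rw [if_neg (by omega)]

lemma even_count_mul {p : Multiset ℕ} (h : IsSymplectic p) (a : ℕ) :
    Even (p.count a * a) := by
  rcases Nat.even_or_odd a with ha | ha
  · exact ha.mul_left _
  · exact (h a ha).mul_right _

/-- In a symplectic partition, the partial sum at a descent is even. -/
lemma even_S {p : Multiset ℕ} (h : IsSymplectic p) (k : ℕ)
    (hk : part p (k + 1) < part p k) : Even (S p (k + 1)) :=
  even_of_descent p id (even_count_mul h) k hk

lemma even_sum {p : Multiset ℕ} (h : IsSymplectic p) : Even p.sum := by
  simpa using even_sum_map p id (even_count_mul h)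

/-- Converse of `even_S`: the parts `≥ v` have even sum for every `v > 0`, and two consecutive such
sums differ by a part times its multiplicity. -/
lemma isSymplectic_of_even_S {p : Multiset ℕ}
    (h : ∀ k, part p (k + 1) < part p k → Even (S p (k + 1))) : IsSymplectic p := by
  have key : ∀ v, 0 < v → Even (p.map fun a => if v ≤ a then a else 0).sum := by
    intro v hv
    set k := (p.filter (v ≤ ·)).card with hk
    have hiff : ∀ i, i < k ↔ v ≤ part p i := fun i => lt_card_filter_iff p v i hv
    have hS : (p.map fun a => if v ≤ a then a else 0).sum = S p k := by
      rw [map_sum p _ (by simp) _ (le_max_left p.card k),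
        ← Finset.sum_subset (Finset.range_subset_range.2 (le_max_right p.card k))]
      · exact Finset.sum_congr rfl fun i hi =>
          if_pos ((hiff i).1 (by simpa using hi))
      · intro i _ hi
        exact if_neg fun hc => hi (by simpa using (hiff i).2 hc)
    rw [hS]
    rcases Nat.eq_zero_or_pos k with h0 | h0
    · simp [h0, S]
    · obtain ⟨l, hl⟩ := Nat.exists_eq_succ_of_ne_zero h0.ne'
      rw [hl]
      apply h l
      have h1 := hiff l
      have h2 := hiff (l + 1)
      omega
  intro a ha
  have e1 := key a ha.pos
  have e2 := key (a + 1) (by omega)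
  have : (p.map fun x => if a ≤ x then x else 0).sum
      = (p.map fun x => if a + 1 ≤ x then x else 0).sum + p.count a * a := by
    clear h key e1 e2
    induction p using Multiset.induction_on with
    | empty => simp
    | cons b p ih =>
      rw [Multiset.count_cons]
      simp only [Multiset.map_cons, Multiset.sum_cons, ih, add_mul]
      split_ifs <;> omega
  rw [this, Nat.even_add] at e1
  have e3 := e1.1 e2
  rw [Nat.even_mul] at e3
  rcases e3 with e3 | e3
  · exact e3
  · exact absurd e3 (Nat.not_even_iff_odd.2 ha)

/-- The multiplicity of `j + 1` in `p` is a difference of consecutive parts of the transpose. -/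
lemma count_eq (p : Multiset ℕ) (j : ℕ) :
    part (transposeP p) j = part (transposeP p) (j + 1) + p.count (j + 1) := by
  rw [part_transposeP, part_transposeP, card_filter_eq, card_filter_eq,
    Multiset.count_eq_card_filter_eq, card_filter_eq, ← Multiset.sum_map_add]
  congr 1
  apply Multiset.map_congr rfl
  intro a _
  split_ifs <;> omega

/-- A partition is symplectic exactly when the partial sums of its transpose over an even
number of parts are even. -/
lemma isSymplectic_iff_transposeP (p : Multiset ℕ) :
    IsSymplectic p ↔ ∀ i, Even (S (transposeP p) (2 * i)) := by
  have hstep : ∀ i, S (transposeP p) (2 * (i + 1))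
      = S (transposeP p) (2 * i) + 2 * part (transposeP p) (2 * i + 1) + p.count (2 * i + 1) := by
    intro i
    have := count_eq p (2 * i)
    rw [show 2 * (i + 1) = 2 * i + 1 + 1 by ring, S_succ, S_succ]
    omega
  constructor
  · intro h i
    induction i with
    | zero => simp [S]
    | succ i ih =>
      have := h (2 * i + 1) ⟨i, rfl⟩
      rw [hstep]
      exact (ih.add (even_two_mul _)).add this
  · rintro h a ⟨i, rfl⟩
    have h1 := h (i + 1)
    have h2 := h i
    rw [hstep] at h1
    grind

/-! ### An explicit formula for the collapse -/

/-- The amount, `0` or `1`, by which the Sp-collapse lowers the `k`-th partial sum of `p`. -/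
def eps (p : Multiset ℕ) : ℕ → ℕ
  | 0 => 0
  | k + 1 =>
    if Odd (S p (k + 1)) ∧ ¬(part p k = part p (k + 1) ∧ Odd (part p k)) then 1 else 0

lemma eps_spec (p : Multiset ℕ) (k : ℕ) :
    (eps p (k + 1) = 1 ∧ S p (k + 1) % 2 = 1 ∧
      ¬(part p k = part p (k + 1) ∧ part p k % 2 = 1)) ∨
    (eps p (k + 1) = 0 ∧
      (S p (k + 1) % 2 = 0 ∨ (part p k = part p (k + 1) ∧ part p k % 2 = 1))) := by
  simp only [eps, Nat.odd_iff]
  split_ifs with h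
  · exact Or.inl ⟨rfl, h⟩
  · refine Or.inr ⟨rfl, ?_⟩
    by_contra! hc
    exact h ⟨by omega, fun h2 => hc.2 h2.1 h2.2⟩

lemma eps_le_S (p : Multiset ℕ) (k : ℕ) : eps p k ≤ S p k := by
  cases k with
  | zero => exact Nat.zero_le _
  | succ k => have := eps_spec p k; omega

lemma eps_le_one (p : Multiset ℕ) (k : ℕ) : eps p k ≤ 1 := by
  cases k with
  | zero => exact Nat.zero_le _
  | succ k => have := eps_spec p k; omega

lemma eps_eq_zero {p : Multiset ℕ} {k : ℕ} (h : S p k % 2 = 0) : eps p k = 0 := by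
  cases k with
  | zero => rfl
  | succ k => have := eps_spec p k; omega

/-- If a symplectic `r ≤ p` touched `p` where `eps p = 1`, it would have no descent there, hence
touch `p` at the next position under the same conditions, and so on forever; but the total sum of
`r` is even. -/
lemma S_add_eps_le {p r : Multiset ℕ} (hr : IsSymplectic r)
    (hle : ∀ k, S r k ≤ S p k) (k : ℕ) : S r k + eps p k ≤ S p k := by
  cases k with
  | zero => simp [S, eps]
  | succ k =>
    by_contra! hlt
    have h1 := eps_spec p k
    have h2 := hle (k + 1)
    have h3 : S r (k + 1) = S p (k + 1) := by omega
    have h4 : S p (k + 1) % 2 = 1 ∧ ¬(part p k = part p (k + 1) ∧ part p k % 2 = 1) := by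
      omega
    clear h1 h2 hlt
    have key : ∀ j, S r (k + j + 1) = S p (k + j + 1) ∧ S p (k + j + 1) % 2 = 1 ∧
        ¬(part p (k + j) = part p (k + j + 1) ∧ part p (k + j) % 2 = 1) := by
      intro j
      induction j with
      | zero => exact ⟨h3, h4⟩
      | succ j ih =>
        obtain ⟨i1, i2, i3⟩ := ih
        have a1 := hle (k + j)
        have a2 := hle (k + j + 2)
        have s1 := S_succ r (k + j)
        have s2 := S_succ p (k + j)
        have s3 := S_succ r (k + j + 1)
        have s4 := S_succ p (k + j + 1)
        have m1 := part_antitone r (Nat.le_succ (k + j))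
        have m2 := part_antitone p (Nat.le_succ (k + j))
        have nd : ¬ part r (k + j + 1) < part r (k + j) := by
          intro h
          have := even_S hr (k + j) h
          rw [Nat.even_iff] at this
          omega
        simp only [Nat.succ_eq_add_one] at m1 m2
        rw [show k + (j + 1) = k + j + 1 by ring]
        rw [show k + j + 1 + 1 = k + j + 2 by ring] at *
        refine ⟨by omega, by omega, by omega⟩
    have h5 := (key (r.card)).1
    have h6 := (key (r.card)).2.1
    rw [← h5, S_eq_sum r (by omega)] at h6
    have := even_sum hr
    rw [Nat.even_iff] at this
    omega

/-- The Sp-collapse `d` of `p` lowers the `k`-th partial sum by exactly `eps p k`: the sequence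
with these partial sums is antitone and symplectic, and by `S_add_eps_le` it is the greatest one. -/
lemma S_collapse {p d : Multiset ℕ} (hd : IsSpCollapse p d) (k : ℕ) :
    S d k + eps p k = S p k := by
  obtain ⟨-, hd1, hd2, hd3⟩ := hd
  rw [dominates_iff] at hd2
  have hub := S_add_eps_le hd1 hd2.2
  have hpe : p.sum % 2 = 0 := by
    rw [hd2.1, ← Nat.even_iff]
    exact even_sum hd1
  set D : ℕ → ℕ := fun k => S p k - eps p k with hD
  set f : ℕ → ℕ := fun k => D (k + 1) - D k with hf
  have hDe : ∀ k, D k + eps p k = S p k := fun k => Nat.sub_add_cancel (eps_le_S p k)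
  have hmono : ∀ k, D k ≤ D (k + 1) := by
    intro k
    have e1 := hDe k
    have e2 := hDe (k + 1)
    have s := S_succ p k
    have b := eps_spec p k
    rcases k with _ | k
    · have : S p 0 = 0 := S_zero p
      omega
    · have b' := eps_spec p k
      have m := part_antitone p (Nat.le_succ k)
      have s' := S_succ p k
      simp only [Nat.succ_eq_add_one] at m
      omega
  have hDf : ∀ k, D (k + 1) = D k + f k := fun k => by
    have := hmono k
    simp only [hf]
    omega
  have hanti : Antitone f := by
    apply antitone_nat_of_succ_le
    intro k
    have d1 := hDf k
    have d2 : D (k + 2) = D (k + 1) + f (k + 1) := hDf (k + 1)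
    have e1 := hDe k
    have e2 := hDe (k + 1)
    have e3 := hDe (k + 2)
    have s1 := S_succ p k
    have s2 := S_succ p (k + 1)
    have b2 := eps_spec p k
    have b3 := eps_spec p (k + 1)
    have m1 := part_antitone p (Nat.le_succ k)
    have m2 := part_antitone p (Nat.le_succ (k + 1))
    simp only [Nat.succ_eq_add_one] at m1 m2
    rw [show k + 1 + 1 = k + 2 by ring] at *
    rcases k with _ | k
    · have : S p 0 = 0 := S_zero p
      have : eps p 0 = 0 := rfl
      omega
    · have b1 := eps_spec p k
      have m := part_antitone p (Nat.le_succ k)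
      simp only [Nat.succ_eq_add_one] at m
      omega
  have hDlast : ∀ k, p.card ≤ k → D k = p.sum := by
    intro k hk
    have h1 := hDe k
    rw [S_eq_sum p hk, eps_eq_zero (by rw [S_eq_sum p hk, hpe])] at h1
    omega
  have hfz : ∀ i, p.card ≤ i → f i = 0 := by
    intro i hi
    simp only [hf]
    rw [hDlast i hi, hDlast (i + 1) (by omega)]
    omega
  set M := ofSeq f p.card with hM
  have hpart : part M = f := part_ofSeq f hanti _ hfz
  have hS : ∀ k, S M k = D k := by
    intro k
    induction k with
    | zero => simp [S, hD]
    | succ k ih => rw [S_succ, ih, hpart, hDf]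
  have hMsum : M.sum = p.sum := by
    rw [← S_eq_sum M (le_max_left M.card p.card), hS]
    exact hDlast _ (le_max_right _ _)
  have hMs : IsSymplectic M := by
    apply isSymplectic_of_even_S
    intro k hk
    rw [hS, Nat.even_iff]
    rw [hpart] at hk
    by_contra hodd
    have d1 := hDf k
    have d2 : D (k + 2) = D (k + 1) + f (k + 1) := hDf (k + 1)
    have e1 := hDe k
    have e2 := hDe (k + 1)
    have e3 := hDe (k + 2)
    have s1 := S_succ p k
    have s2 : S p (k + 2) = S p (k + 1) + part p (k + 1) := S_succ p (k + 1)
    have b2 := eps_spec p k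
    have z1 : eps p k = 0 := eps_eq_zero (by omega)
    have z3 : eps p (k + 2) = 0 := eps_eq_zero (by omega)
    omega
  have h1 := hd3 M (zero_notMem_ofSeq _ _) hMs ((dominates_iff _ _).2
    ⟨hMsum.symm, fun k => by rw [hS]; have := hDe k; omega⟩)
  have h2 := ((dominates_iff _ _).1 h1).2 k
  rw [hS] at h2
  have := hDe k
  have := hub k
  omega

/-! ### The partition `q⁻` -/

/-- Truncated subtraction makes the formula correct also when the smallest part is deleted. -/
lemma part_qminus {q : Multiset ℕ} (hq : q ≠ 0) :
    part (qminus q) = fun i => if i + 1 = q.card then part q i - 1 else part q i := by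
  obtain ⟨a, l, hl⟩ : ∃ a l, q.sort (· ≤ ·) = a :: l := by
    cases h : q.sort (· ≤ ·) with
    | nil =>
      have := Multiset.sort_eq q (· ≤ ·)
      rw [h] at this
      exact absurd this.symm hq
    | cons a l => exact ⟨a, l, rfl⟩
  have hqe : q = a ::ₘ (l : Multiset ℕ) := by
    rw [Multiset.cons_coe, ← hl, Multiset.sort_eq]
  have hcard : q.card = l.length + 1 := by rw [hqe]; simp
  have hp : ∀ i, part q i = (l.reverse ++ [a]).getD i 0 := by
    intro i
    rw [part, hl, List.reverse_cons]
  have hlast : part q l.length = a := by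
    rw [hp, List.getD_append_right _ _ _ _ (by simp)]
    simp
  apply part_eq _ _ _ q.card
  · intro i hi
    rw [if_neg (by omega), part_zero_of_card_le q hi]
  · intro φ h0
    have h1 : ((qminus q).map φ).sum = φ (a - 1) + (l.map φ).sum := by
      have her : q.erase a = (l : Multiset ℕ) := by rw [hqe, Multiset.erase_cons_head]
      unfold qminus
      rw [hl]
      simp only [List.head?_cons]
      rw [her]
      split_ifs with h
      · rw [Nat.sub_eq_zero_of_le h, h0]
        simp
      · simp
    rw [h1, hcard, Finset.sum_range_succ, if_pos rfl, hlast, add_comm]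
    congr 1
    have h2 := list_map_sum φ h0 l.reverse l.length (by simp)
    rw [List.map_reverse, List.sum_reverse] at h2
    rw [h2]
    apply Finset.sum_congr rfl
    intro i hi
    have hi' : i < l.length := by simpa using hi
    rw [if_neg (by omega), hp, List.getD_append _ _ _ _ (by simpa using hi')]
  · intro i j hij
    have h1 := part_antitone q hij
    beta_reduce
    split_ifs with hj hi
    · omega
    · omega
    · rw [part_zero_of_card_le q (i := j) (by omega)]
      exact Nat.zero_le _
    · exact h1

lemma S_qminus_of_lt {q : Multiset ℕ} {k : ℕ} (hk : k < q.card) : S (qminus q) k = S q k := by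
  have hq : q ≠ 0 := by rintro rfl; simp at hk
  unfold S
  apply Finset.sum_congr rfl
  intro i hi
  have : i < k := by simpa using hi
  rw [part_qminus hq]
  simp only
  rw [if_neg (by omega)]

lemma S_qminus_of_le {q : Multiset ℕ} (hq : q ≠ 0) (h0 : 0 ∉ q) {k : ℕ} (hk : q.card ≤ k) :
    S (qminus q) k + 1 = S q k := by
  induction k, hk using Nat.le_induction with
  | base =>
    obtain ⟨n, hn⟩ : ∃ n, q.card = n + 1 :=
      Nat.exists_eq_succ_of_ne_zero (by simpa using hq)
    have hpos : 1 ≤ part q n := by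
      rw [← lt_card_filter_iff q 1 n one_pos, Multiset.filter_eq_self.2]
      · omega
      · intro a ha
        exact Nat.pos_of_ne_zero fun h => h0 (h ▸ ha)
    rw [hn, S_succ, S_succ, S_qminus_of_lt (by omega), part_qminus hq]
    simp only
    rw [if_pos hn.symm]
    omega
  | succ k hk ih =>
    rw [S_succ, S_succ, ← ih, part_qminus hq]
    simp only
    rw [if_neg (by omega)]
    omega

/-- In an orthogonal partition the `k`-th partial sum has the parity of `k`, except inside a run
of equal even parts. -/
lemma S_parity {q : Multiset ℕ} (hev : ∀ a, Even a → Even (q.count a)) (k : ℕ) :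
    (S q (k + 1) + (k + 1)) % 2 = 0 ∨ (part q k = part q (k + 1) ∧ part q k % 2 = 0) := by
  have hdesc : ∀ k, part q (k + 1) < part q k → (S q (k + 1) + (k + 1)) % 2 = 0 := by
    intro k hk
    have h := even_of_descent q (fun a => a + 1) (fun a => by
      rcases Nat.even_or_odd a with ha | ha
      · exact (hev a ha).mul_right _
      · exact (ha.add_one).mul_left _) k hk
    rw [Finset.sum_add_distrib, Nat.even_iff] at h
    simpa [S] using h
  induction k with
  | zero =>
    have h1 := hdesc 0
    have m := part_antitone q (Nat.le_succ 0)
    have s := S_succ q 0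
    have s0 := S_zero q
    simp only [Nat.succ_eq_add_one] at *
    omega
  | succ k ih =>
    have h1 := hdesc (k + 1)
    have h2 := hdesc k
    have m1 := part_antitone q (Nat.le_succ k)
    have m := part_antitone q (Nat.le_succ (k + 1))
    have s := S_succ q (k + 1)
    simp only [Nat.succ_eq_add_one] at *
    omega



/-- The Sp-collapse of `q⁻`, for `q` orthogonal of odd size, has a symplectic transpose. -/
lemma even_S_dual {q d : Multiset ℕ} (h0 : 0 ∉ q) (hev : ∀ a, Even a → Even (q.count a))
    (hodd : Odd q.card) (hd : IsSpCollapse (qminus q) d) (i : ℕ) : Even (S d (2 * i)) := by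
  have hq : q ≠ 0 := by rintro rfl; simp at hodd
  rw [Nat.odd_iff] at hodd
  have hc := S_collapse hd (2 * i)
  rcases i with _ | i
  · simp [S]
  rw [Nat.even_iff]
  rw [show 2 * (i + 1) = 2 * i + 1 + 1 by ring] at *
  have he := eps_spec (qminus q) (2 * i + 1)
  by_cases hk : 2 * i + 1 + 1 < q.card
  · have hp := part_qminus hq
    have p1 := congrFun hp (2 * i + 1)
    rw [if_neg (by omega)] at p1
    have hS := S_qminus_of_lt hk
    have := S_parity hev (2 * i + 1)
    omega
  · have s1 := S_qminus_of_le hq h0 (le_of_not_gt hk)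
    have s2 := S_qminus_of_le hq h0 le_rfl
    have e := even_sum hd.2.1
    rw [← (dominates_iff _ _).1 hd.2.2.1 |>.1, Nat.even_iff] at e
    have s3 := S_le_sum (qminus q) (2 * i + 1 + 1)
    have s4 : q.sum = S q (2 * i + 1 + 1) := (S_eq_sum q (le_of_not_gt hk)).symm
    have s5 := S_qminus_of_le hq h0 (le_max_left q.card (qminus q).card)
    rw [S_eq_sum _ (le_max_right _ _), S_eq_sum q (le_max_left _ _)] at s5
    omega

/-- Minimality of the dual: it lies below every `x` whose transpose is symplectic and whose
partial sums are at least those of `q` minus one. -/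
lemma S_dual_le {q d : Multiset ℕ} (h0 : 0 ∉ q) (hev : ∀ a, Even a → Even (q.count a))
    (hodd : Odd q.card) (hd : IsSpCollapse (qminus q) d) (x : Multiset ℕ)
    (hx : ∀ k, S q k ≤ S x k + 1) (hxe : ∀ i, Even (S x (2 * i))) (k : ℕ) : S d k ≤ S x k := by
  have hq : q ≠ 0 := by rintro rfl; simp at hodd
  have hde := even_S_dual h0 hev hodd hd
  rw [Nat.odd_iff] at hodd
  simp only [Nat.even_iff] at hde hxe
  have hc := S_collapse hd
  by_cases hk : k < q.card
  · have hS := S_qminus_of_lt hk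
    have hck := hc k
    have hxk := hx k
    rcases Nat.even_or_odd' k with ⟨i, rfl | rfl⟩
    · have := hde i
      have := hxe i
      omega
    · have he := eps_spec (qminus q) (2 * i)
      have hp := part_qminus hq
      have p1 := congrFun hp (2 * i)
      have p2 := congrFun hp (2 * i + 1)
      rw [if_neg (by omega)] at p1 p2
      have hQ := S_parity hev (2 * i)
      have x0 := hxe i
      have x2 := hxe (i + 1)
      have y0 := hx (2 * i)
      have y2 := hx (2 * (i + 1))
      rw [show 2 * (i + 1) = 2 * i + 1 + 1 by ring] at *
      have s0 := S_succ q (2 * i)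
      have s1 := S_succ q (2 * i + 1)
      have t0 := S_succ x (2 * i)
      have t1 := S_succ x (2 * i + 1)
      have mx := part_antitone x (Nat.le_succ (2 * i))
      simp only [Nat.succ_eq_add_one] at mx
      omega
  · have s1 := S_qminus_of_le hq h0 (le_of_not_gt hk)
    have := hc k
    have := hx k
    omega

/-! ### Comparison of `p₂` with `q` -/

/-- If `A'` has `2 * s` parts, all `≥ 2 * b + 1`, the collapse followed by the part `2 * b` loses
at most `1` against `A'` followed by the part `2 * b + 1`. -/
lemma H_add_le_collapse {s b : ℕ} {A' c' : Multiset ℕ} (hcard : A'.card = 2 * s)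
    (hA : ∀ a ∈ A', 2 * b + 1 ≤ a) (hc' : IsSpCollapse A' c') (t : ℕ) :
    H A' t + (2 * b + 1 - t) ≤ H c' t + (2 * b - t) + 1 := by
  have hS := S_collapse hc'
  by_cases ht : 2 * b + 1 ≤ t
  · have := H_le_of_S_le (p := c') (q := A') 1
      (fun k => by have := hS k; have := eps_le_one A' k; omega) t
    omega
  · -- all parts of `A'` exceed `t`, and both partitions have the same sum of `2 * s` parts
    have h1 : S A' (2 * s) = 2 * s * t + H A' t := by
      apply S_eq
      · intro i hi
        rcases Nat.eq_zero_or_pos t with rfl | hpos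
        · exact Nat.zero_le _
        · rw [← lt_card_filter_iff A' t i hpos, Multiset.filter_eq_self.2]
          · omega
          · intro a ha
            have := hA a ha
            omega
      · intro i hi
        rw [part_zero_of_card_le A' (by omega)]
        exact Nat.zero_le _
    have hsum : S A' (2 * s) = A'.sum := S_eq_sum A' hcard.le
    have hev := even_sum hc'.2.1
    rw [← ((dominates_iff _ _).1 hc'.2.2.1).1, Nat.even_iff] at hev
    have h2 := hS (2 * s)
    rw [eps_eq_zero (by omega)] at h2
    have h3 := S_le c' (2 * s) t
    omega

end SpDual

open SpDual
/-- Let `E` be a finite multiset of positive integers, `s ≥ 0`, and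
`m 1 < m 2 < ⋯ < m (2s+1)` nonnegative integers.  Let `q` be the partition consisting of
two copies of each element of `E` together with the parts `2 * m i + 1` for
`1 ≤ i ≤ 2s+1`, and let `p₂` consist of two copies of each element of `E`, the parts of
the Sp-collapse `c'` of `[(2 m (2s+1) + 1) ⋯ (2 m 2 + 1)]`, and an extra part `2 * m 1`
when `m 1 > 0`.  Then the Sp-collapse of the transpose of `p₂` equals the transpose of
the Sp-collapse of `q⁻`. -/
theorem spCollapse_transpose_eq_transpose_spCollapse_qminus
    (s : ℕ) (E : Multiset ℕ) (hE : ∀ x ∈ E, 0 < x)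
    (m : ℕ → ℕ) (hm : ∀ i j, 1 ≤ i → i < j → j ≤ 2 * s + 1 → m i < m j)
    (c' c d : Multiset ℕ)
    (hc' : IsSpCollapse ((Multiset.range (2 * s)).map fun i => 2 * m (i + 2) + 1) c')
    (hc : IsSpCollapse
      (transposeP (E + E + c' + (if 0 < m 1 then ({2 * m 1} : Multiset ℕ) else 0))) c)
    (hd : IsSpCollapse
      (qminus (E + E + (Multiset.range (2 * s + 1)).map fun i => 2 * m (i + 1) + 1)) d) :
    c = transposeP d := by
  set b := m 1 with hb
  set A' : Multiset ℕ := (Multiset.range (2 * s)).map fun i => 2 * m (i + 2) + 1 with hA'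
  set q : Multiset ℕ :=
    E + E + (Multiset.range (2 * s + 1)).map fun i => 2 * m (i + 1) + 1 with hq
  set p₂ : Multiset ℕ := E + E + c' + (if 0 < b then ({2 * b} : Multiset ℕ) else 0) with hp₂
  have hAcons : (Multiset.range (2 * s + 1)).map (fun i => 2 * m (i + 1) + 1)
      = (2 * b + 1) ::ₘ A' := by
    change ((List.range (2 * s + 1)).map fun i => 2 * m (i + 1) + 1 : Multiset ℕ) = _
    rw [List.range_succ_eq_map, List.map_cons, List.map_map]
    rfl
  have hAcard : A'.card = 2 * s := by simp [hA']
  have hAge : ∀ a ∈ A', 2 * b + 1 ≤ a := by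
    intro a ha
    simp only [hA', Multiset.mem_map, Multiset.mem_range] at ha
    obtain ⟨i, hi, rfl⟩ := ha
    have := hm 1 (i + 2) le_rfl (by omega) (by omega)
    omega
  rw [hAcons] at hq
  -- `q` is an orthogonal partition of odd size
  have hqcard : q.card = 2 * E.card + (2 * s + 1) := by
    rw [hq]
    simp [hAcard]
    ring
  have hqodd : Odd q.card := by rw [hqcard, Nat.odd_iff]; omega
  have hqne : q ≠ 0 := by rintro h; rw [h] at hqcard; simp at hqcard
  have hq0 : 0 ∉ q := by
    intro h
    rw [hq] at h
    simp only [Multiset.mem_add, Multiset.mem_cons] at h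
    rcases h with (h | h) | h | h
    · exact absurd (hE 0 h) (lt_irrefl _)
    · exact absurd (hE 0 h) (lt_irrefl _)
    · omega
    · have := hAge 0 h; omega
  have hqev : ∀ a, Even a → Even (q.count a) := by
    intro a ha
    have : ((2 * b + 1) ::ₘ A').count a = 0 := by
      rw [Multiset.count_eq_zero, ← hAcons, Multiset.mem_map]
      rintro ⟨i, -, rfl⟩
      rw [Nat.even_iff] at ha
      omega
    rw [hq, Multiset.count_add, Multiset.count_add, this]
    exact ⟨_, rfl⟩
  have hqH : ∀ t, H q t = H E t + H E t + (H A' t + (2 * b + 1 - t)) := by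
    intro t
    rw [hq, H_add, H_add]
    simp [H, add_comm]
  have hqsum : q.sum = E.sum + E.sum + (A'.sum + (2 * b + 1)) := by
    rw [hq, Multiset.sum_add, Multiset.sum_add, Multiset.sum_cons]
    ring
  -- `p₂` is symplectic
  have hp0 : 0 ∉ p₂ := by
    intro h
    rw [hp₂] at h
    simp only [Multiset.mem_add] at h
    rcases h with ((h | h) | h) | h
    · exact absurd (hE 0 h) (lt_irrefl _)
    · exact absurd (hE 0 h) (lt_irrefl _)
    · exact hc'.1 h
    · split_ifs at h with hb0
      · rw [Multiset.mem_singleton] at h; omega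
      · exact absurd h (Multiset.notMem_zero _)
  have hps : IsSymplectic p₂ := by
    intro a ha
    have : (if 0 < b then ({2 * b} : Multiset ℕ) else 0).count a = 0 := by
      rw [Multiset.count_eq_zero]
      split_ifs
      · rw [Multiset.mem_singleton]
        rintro rfl
        rw [Nat.odd_iff] at ha
        omega
      · exact Multiset.notMem_zero _
    rw [hp₂, Multiset.count_add, Multiset.count_add, Multiset.count_add, this]
    exact (Even.add ⟨_, rfl⟩ (hc'.2.1 a ha)).add Even.zero
  have hpH : ∀ t, H p₂ t = H E t + H E t + (H c' t + (2 * b - t)) := by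
    intro t
    have : H (if 0 < b then ({2 * b} : Multiset ℕ) else 0) t = 2 * b - t := by
      split_ifs with hb0
      · simp [H]
      · have : b = 0 := by omega
        simp [H, this]
    rw [hp₂, H_add, H_add, H_add, this]
    ring
  have hpsum : p₂.sum = E.sum + E.sum + (c'.sum + 2 * b) := by
    have : (if 0 < b then ({2 * b} : Multiset ℕ) else 0).sum = 2 * b := by
      split_ifs with hb0
      · simp
      · have : b = 0 := by omega
        simp [this]
    rw [hp₂, Multiset.sum_add, Multiset.sum_add, Multiset.sum_add, this]
    ring
  have hdom' := (dominates_iff _ _).1 hc'.2.2.1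
  have hsum : p₂.sum + 1 = q.sum := by rw [hpsum, hqsum, hdom'.1]; ring
  -- the partial sums of `p₂` lie between those of `q` minus one and those of `q`
  have hle : ∀ k, S p₂ k ≤ S q k := S_le_of_H_le 0 fun t => by
    have h1 := H_le_of_S_le (p := A') (q := c') 0 hdom'.2 t
    rw [hpH, hqH]
    omega
  have hge : ∀ k, S q k ≤ S p₂ k + 1 := S_le_of_H_le 1 fun t => by
    have := H_add_le_collapse hAcard hAge hc' t
    rw [hpH, hqH]
    omega
  have hqm : Dominates (qminus q) p₂ := by
    rw [dominates_iff]
    have hlast : ∀ k, q.card ≤ k → S (qminus q) k = p₂.sum := by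
      intro k hk
      have h1 := S_qminus_of_le hqne hq0 hk
      rw [S_eq_sum q hk] at h1
      omega
    refine ⟨?_, fun k => ?_⟩
    · rw [← S_eq_sum _ (le_max_right q.card _)]
      exact hlast _ (le_max_left _ _)
    · by_cases hk : k < q.card
      · rw [S_qminus_of_lt hk]
        exact hle k
      · rw [hlast k (le_of_not_gt hk)]
        exact S_le_sum _ _
  have hdp := (dominates_iff _ _).1 (hd.2.2.2 p₂ hp0 hps hqm)
  have hdT : IsSymplectic (transposeP d) := by
    rw [isSymplectic_iff_transposeP]
    intro i
    have := even_S_dual hq0 hqev hqodd hd i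
    simpa only [S, part_transposeP_transposeP] using this
  -- `dᵗ` competes for the collapse of `p₂ᵗ`
  have hcd := (dominates_iff _ _).1 (hc.2.2.2 (transposeP d) (zero_notMem_transposeP d) hdT (by
    rw [dominates_iff, sum_transposeP, sum_transposeP]
    refine ⟨hdp.1.symm, fun k => ?_⟩
    have h1 := S_transposeP d k
    have h2 := S_transposeP p₂ k
    have h3 := H_le_of_S_le (p := d) (q := p₂) 0 hdp.2 k
    have h4 := hdp.1
    omega))
  have hcp := (dominates_iff _ _).1 hc.2.2.1
  have hcs : p₂.sum = c.sum := by rw [← hcp.1, sum_transposeP]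
  -- conversely `cᵗ` lies above `p₂`, hence above `d`
  have hxp : ∀ k, S p₂ k ≤ S (transposeP c) k + 0 := S_le_of_H_le 0 fun t => by
    have h1 := S_transposeP p₂ t
    have h2 := S_add_H_transposeP c t
    have h3 := hcp.2 t
    omega
  have hdx := S_dual_le hq0 hqev hqodd hd (transposeP c)
    (fun k => by have := hge k; have := hxp k; omega)
    ((isSymplectic_iff_transposeP c).1 hc.2.1)
  apply eq_of_S_eq hc.1 (zero_notMem_transposeP d)
  intro k
  apply le_antisymm _ (hcd.2 k)
  have h1 := S_transposeP d k
  have h2 := S_add_H_transposeP c k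
  have h3 := H_le_of_S_le (p := transposeP c) (q := d) 0 hdx k
  have h4 := hdp.1
  omega
end

section
/- Let E be a finite multiset of positive integers, let s ≥ 0, and let m_1 < m_2 < ⋯ < m_{2s+1} be integers with m_1 ≥ 0. Let q be the partition consisting of two copies of each element of E together with the parts 2m_1+1, 2m_2+1, …, 2m_{2s+1}+1, and let p_2 be the partition consisting of two copies of each element of E together with the parts of the Sp-collapse of [(2m_{2s+1}+1)(2m_{2s}+1)⋯(2m_2+1)] and, if m_1 > 0, one additional part 2m_1 (for s = 0 the Sp-collapse factor is the empty partition). Then p_2 is symplectic and the Sp-collapse of q^− equals the Sp-expansion of p_2; that is, (q^−)_{Sp} = (p_2)^{Sp}. -/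
/-! ### Tail sums of the transpose and dominance -/

/-- `tailSum p c = ∑_{x ∈ p} (x - c)^+` (truncated subtraction): the sum of the parts of index
greater than `c` of the transpose of `p`. -/
def tailSum (p : Multiset ℕ) (c : ℕ) : ℕ := (p.map fun x => x - c).sum

@[simp] lemma tailSum_zero (c : ℕ) : tailSum 0 c = 0 := rfl

@[simp] lemma tailSum_cons (a : ℕ) (p : Multiset ℕ) (c : ℕ) :
    tailSum (a ::ₘ p) c = (a - c) + tailSum p c := by
  simp [tailSum]

@[simp] lemma tailSum_add (p q : Multiset ℕ) (c : ℕ) :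
    tailSum (p + q) c = tailSum p c + tailSum q c := by
  simp [tailSum]

@[simp] lemma tailSum_singleton (a c : ℕ) : tailSum {a} c = a - c := by
  simp [tailSum]

lemma tailSum_at_zero (p : Multiset ℕ) : tailSum p 0 = p.sum := by
  simp [tailSum]

lemma take_sum_le (l : List ℕ) (k c : ℕ) :
    (l.take k).sum ≤ k * c + (l.map fun x => x - c).sum := by
  induction l generalizing k with
  | nil => simp
  | cons x t ih =>
    cases k with
    | zero => simp
    | succ k =>
      have := ih k
      simp only [List.take_succ_cons, List.sum_cons, List.map_cons, Nat.succ_mul]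
      omega

lemma map_sub_sum_eq_zero (l : List ℕ) (c : ℕ) (h : ∀ x ∈ l, x ≤ c) :
    (l.map fun x => x - c).sum = 0 := by
  rw [List.sum_eq_zero_iff]
  intro y hy
  obtain ⟨x, hx, rfl⟩ := List.mem_map.1 hy
  have := h x hx
  omega

/-- The bound `take_sum_le` is attained for each `c` by some `k`. -/
lemma exists_take_sum_ge (l : List ℕ) (hl : l.Pairwise (· ≥ ·)) (c : ℕ) :
    ∃ k, k * c + (l.map fun x => x - c).sum ≤ (l.take k).sum := by
  induction l with
  | nil => exact ⟨0, by simp⟩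
  | cons x t ih =>
    rw [List.pairwise_cons] at hl
    by_cases hx : x ≤ c
    · refine ⟨0, ?_⟩
      rw [map_sub_sum_eq_zero]
      · simp
      · intro y hy
        rcases List.mem_cons.1 hy with rfl | hy
        · exact hx
        · exact (hl.1 y hy).trans hx
    · obtain ⟨k, hk⟩ := ih hl.2
      refine ⟨k + 1, ?_⟩
      simp only [List.take_succ_cons, List.sum_cons, List.map_cons, Nat.succ_mul]
      omega

/-- The bound `take_sum_le` is attained for each `k` by some `c`. -/
lemma exists_take_sum_ge' (l : List ℕ) (hl : l.Pairwise (· ≥ ·)) (k : ℕ) :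
    ∃ c, (c = 0 ∨ c ∈ l) ∧ k * c + (l.map fun x => x - c).sum ≤ (l.take k).sum := by
  induction l generalizing k with
  | nil => exact ⟨0, by simp⟩
  | cons x t ih =>
    rw [List.pairwise_cons] at hl
    cases k with
    | zero =>
      refine ⟨x, by simp, ?_⟩
      rw [map_sub_sum_eq_zero]
      · simp
      · intro y hy
        rcases List.mem_cons.1 hy with rfl | hy
        · exact le_rfl
        · exact hl.1 y hy
    | succ k =>
      obtain ⟨c, hc, h⟩ := ih hl.2 k
      have hcx : c ≤ x := by
        rcases hc with rfl | hc
        · exact Nat.zero_le _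
        · exact hl.1 c hc
      refine ⟨c, ?_, ?_⟩
      · rcases hc with rfl | hc
        · exact Or.inl rfl
        · exact Or.inr (List.mem_cons_of_mem _ hc)
      · simp only [List.take_succ_cons, List.sum_cons, List.map_cons, Nat.succ_mul]
        omega

lemma sortRev_pairwise (p : Multiset ℕ) :
    ((p.sort (· ≤ ·)).reverse).Pairwise (· ≥ ·) := by
  rw [List.pairwise_reverse]
  exact p.pairwise_sort (· ≤ ·)

lemma tailSum_eq_list (p : Multiset ℕ) (c : ℕ) :
    (((p.sort (· ≤ ·)).reverse).map fun x => x - c).sum = tailSum p c := by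
  rw [List.map_reverse, List.sum_reverse]
  conv_rhs => rw [← p.sort_eq (· ≤ ·)]
  simp only [tailSum, Multiset.map_coe, Multiset.sum_coe]

/-- Legendre duality between `topSum p` (concave) and `tailSum p` (convex) turns dominance into
pointwise comparison of tail sums. -/
lemma dominates_iff (p q : Multiset ℕ) :
    Dominates p q ↔ p.sum = q.sum ∧ ∀ c, tailSum q c ≤ tailSum p c := by
  refine and_congr_right fun _ => ⟨fun h c => ?_, fun h k => ?_⟩
  · obtain ⟨k, hk⟩ := exists_take_sum_ge _ (sortRev_pairwise q) c
    have h1 := take_sum_le ((p.sort (· ≤ ·)).reverse) k c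
    have h2 := h k
    rw [tailSum_eq_list] at hk h1
    unfold Multiset.topSum at h2
    omega
  · obtain ⟨c, -, hc⟩ := exists_take_sum_ge' _ (sortRev_pairwise p) k
    have h1 := take_sum_le ((q.sort (· ≤ ·)).reverse) k c
    have h2 := h c
    rw [tailSum_eq_list] at hc h1
    unfold Multiset.topSum
    omega

/-- Multiplicities are second differences of tail sums. -/
lemma tailSum_count (p : Multiset ℕ) (c : ℕ) :
    tailSum p c + tailSum p (c + 2) = 2 * tailSum p (c + 1) + p.count (c + 1) := by
  induction p using Multiset.induction_on with
  | empty => simp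
  | cons a p ih =>
    simp only [tailSum_cons, Multiset.count_cons]
    split_ifs <;> omega

lemma eq_of_tailSum_eq {p q : Multiset ℕ} (hp : 0 ∉ p) (hq : 0 ∉ q)
    (h : ∀ c, tailSum p c = tailSum q c) : p = q := by
  ext c
  cases c with
  | zero => rw [Multiset.count_eq_zero_of_notMem hp, Multiset.count_eq_zero_of_notMem hq]
  | succ c =>
    have h1 := tailSum_count p c
    have h2 := tailSum_count q c
    rw [h, h, h] at h1
    omega

lemma tailSum_eq_zero (p : Multiset ℕ) (c : ℕ) (hc : p.sum ≤ c) : tailSum p c = 0 := by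
  induction p using Multiset.induction_on with
  | empty => simp
  | cons a p ih =>
    simp only [Multiset.sum_cons] at hc
    simp only [tailSum_cons, ih (by omega)]
    omega

/-! ### Symplectic and special partitions in terms of tail sums -/

lemma even_tailSum {p : Multiset ℕ} (hp : IsSymplectic p) (n : ℕ) : Even (tailSum p (2 * n)) := by
  have step : ∀ n, Even (tailSum p (2 * (n + 1))) → Even (tailSum p (2 * n)) := by
    intro n hn
    have h1 := tailSum_count p (2 * n)
    have h2 := hp (2 * n + 1) ⟨n, rfl⟩
    rw [Nat.even_iff] at *
    rw [show 2 * (n + 1) = 2 * n + 2 by ring] at hn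
    omega
  -- `tailSum p` vanishes far out, and evenness propagates down in steps of two.
  have key : ∀ k n, p.sum ≤ n + k → Even (tailSum p (2 * n)) := by
    intro k
    induction k with
    | zero => intro n hn; rw [tailSum_eq_zero p _ (by omega)]; exact Even.zero
    | succ k ih => intro n hn; exact step n (ih (n + 1) (by omega))
  exact key p.sum n (by omega)

lemma isSymplectic_of_tailSum {p : Multiset ℕ} (h : ∀ n, Even (tailSum p (2 * n))) :
    IsSymplectic p := by
  rintro a ⟨n, rfl⟩
  have h1 := tailSum_count p (2 * n)
  have h2 := h n
  have h3 := h (n + 1)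
  rw [show 2 * (n + 1) = 2 * n + 2 by ring] at h3
  rw [Nat.even_iff] at *
  omega

/-- For odd `c`, the terms `(x - c)^+` that are odd are those with `x > c` even. -/
lemma tailSum_mod_two (p : Multiset ℕ) {c : ℕ} (hc : Odd c) :
    tailSum p c % 2 = (p.filter fun x => Even x ∧ c < x).card % 2 := by
  rw [Nat.odd_iff] at hc
  induction p using Multiset.induction_on with
  | empty => simp
  | cons a p ih =>
    rw [tailSum_cons, Multiset.filter_cons, Multiset.card_add]
    split_ifs with h
    · rw [Nat.even_iff] at h
      simp only [Multiset.card_singleton]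
      omega
    · rw [Nat.even_iff] at h
      simp only [Multiset.card_zero]
      omega

lemma card_filter_split (p : Multiset ℕ) {a b : ℕ} (hb : Odd b) (hab : a < b) :
    (p.filter fun x => Even x ∧ a < x).card =
      (p.filter fun x => Even x ∧ a < x ∧ x < b).card +
        (p.filter fun x => Even x ∧ b < x).card := by
  induction p using Multiset.induction_on with
  | empty => simp
  | cons x p ih =>
    simp only [Multiset.filter_cons, Multiset.card_add, ih]
    rw [Nat.odd_iff] at hb
    simp only [Nat.even_iff]
    split_ifs <;> simp <;> omega

lemma isSpecial_of_tailSum {p : Multiset ℕ} (hs : IsSymplectic p)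
    (h : ∀ c ∈ p, Odd c → Even (tailSum p c)) : IsSpecial p := by
  refine ⟨hs, fun a b ha hb hao hbo hab _ => ?_, fun a ha hao _ => ?_⟩
  · have h1 := h a ha hao
    have h2 := h b hb hbo
    rw [Nat.even_iff, tailSum_mod_two p ‹_›] at h1 h2
    have := card_filter_split p hbo hab
    rw [Nat.even_iff]
    omega
  · have h1 := h a ha hao
    rw [Nat.even_iff, tailSum_mod_two p hao] at h1
    rwa [Nat.even_iff]

lemma IsSpecial.even_tailSum {p : Multiset ℕ} (hp : IsSpecial p) :
    ∀ c ∈ p, Odd c → Even (tailSum p c) := by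
  obtain ⟨-, h1, h2⟩ := hp
  -- Downward induction on `c`, through the next larger odd part `b`.
  have key : ∀ k, ∀ c ∈ p, Odd c → p.sum ≤ c + k → Even (tailSum p c) := by
    intro k
    induction k with
    | zero =>
      intro c _ _ hk
      rw [tailSum_eq_zero p c (by omega)]
      exact Even.zero
    | succ k ih =>
      intro c hc hco hk
      by_cases hmax : ∀ d ∈ p, Odd d → d ≤ c
      · have := h2 c hc hco hmax
        rw [Nat.even_iff] at this ⊢
        rw [tailSum_mod_two p hco, this]
      · push Not at hmax
        classical
        have hex : ∃ d, d ∈ p ∧ Odd d ∧ c < d := hmax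
        obtain ⟨hb, hbo, hcb⟩ := Nat.find_spec hex
        have hmin := fun d hd => Nat.find_min (H := hex) (m := d) hd
        generalize Nat.find hex = b at hb hbo hcb hmin
        have e1 := ih b hb hbo (by omega)
        have e2 := h1 c b hc hb hco hbo hcb
          (fun d hd hdo hcd => hmin d hcd.2 ⟨hd, hdo, hcd.1⟩)
        have e3 := card_filter_split p hbo hcb
        rw [Nat.even_iff] at e1 e2 ⊢
        rw [tailSum_mod_two p ‹_›] at e1 ⊢
        omega
  exact fun c hc hco => key p.sum c hc hco (by omega)

/-! ### The partitions `q⁻` and `p₂` -/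

/-- If `a` is the smallest part of `q`, then `q⁻` has tail sums `F_q(c) - 1` for `c < a` and
`F_q(c)` for `c ≥ a`. -/
lemma qminus_spec {q : Multiset ℕ} (hq : q ≠ 0) (h0 : 0 ∉ q) :
    ∃ a ∈ q, (∀ x ∈ q, a ≤ x) ∧
      ∀ c, tailSum (qminus q) c + (if c < a then 1 else 0) = tailSum q c := by
  have hs := q.pairwise_sort (· ≤ ·)
  have hm : ∀ x, x ∈ q.sort (· ≤ ·) ↔ x ∈ q := fun x => Multiset.mem_sort _
  unfold qminus
  rcases hl : q.sort (· ≤ ·) with _ | ⟨a, t⟩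
  · exact absurd (by rw [← q.sort_eq (· ≤ ·), hl]; rfl) hq
  · rw [hl, List.pairwise_cons] at hs
    rw [hl] at hm
    have ha : a ∈ q := (hm a).1 (by simp)
    have ha0 : a ≠ 0 := fun h => h0 (h ▸ ha)
    refine ⟨a, ha, fun x hx => ?_, fun c => ?_⟩
    · rcases List.mem_cons.1 ((hm x).2 hx) with rfl | h
      · exact le_rfl
      · exact hs.1 x h
    · have e : tailSum q c = (a - c) + tailSum (q.erase a) c := by
        rw [← tailSum_cons, Multiset.cons_erase ha]
      rw [e]
      simp only [List.head?_cons]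
      split_ifs <;> (try simp only [tailSum_cons]) <;> omega

/-- The parts `2 m₂ + 1, …, 2 m_{2s+1} + 1`. -/
def oddParts (m : ℕ → ℕ) (s : ℕ) : Multiset ℕ :=
  (Multiset.range (2 * s)).map fun i => 2 * m (i + 2) + 1

/-- The parts `2 m_{2j} + 2` and `2 m_{2j+1}` for `1 ≤ j ≤ s`: for increasing `m`, a symplectic
partition dominated by `oddParts m s` (in fact its Sp-collapse, though this is not needed). -/
def evenParts (m : ℕ → ℕ) (s : ℕ) : Multiset ℕ :=
  (Multiset.range s).bind fun j => {2 * m (2 * j + 2) + 2, 2 * m (2 * j + 3)}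

lemma oddParts_succ (m : ℕ → ℕ) (s c : ℕ) : tailSum (oddParts m (s + 1)) c =
    (2 * m (2 * s + 2) + 1 - c) + (2 * m (2 * s + 3) + 1 - c) + tailSum (oddParts m s) c := by
  unfold oddParts
  rw [show 2 * (s + 1) = (2 * s + 1) + 1 by ring, Multiset.range_succ, Multiset.range_succ]
  simp only [Multiset.map_cons, tailSum_cons]
  ring_nf

lemma evenParts_succ (m : ℕ → ℕ) (s c : ℕ) : tailSum (evenParts m (s + 1)) c =
    (2 * m (2 * s + 2) + 2 - c) + (2 * m (2 * s + 3) - c) + tailSum (evenParts m s) c := by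
  unfold evenParts
  rw [Multiset.range_succ]
  simp only [Multiset.cons_bind, tailSum_add, Multiset.insert_eq_cons, tailSum_cons,
    tailSum_singleton]

lemma tailSum_allParts (m : ℕ → ℕ) (s c : ℕ) :
    tailSum ((Multiset.range (2 * s + 1)).map fun i => 2 * m (i + 1) + 1) c =
      (2 * m 1 + 1 - c) + tailSum (oddParts m s) c := by
  induction s with
  | zero => simp [oddParts]
  | succ s ih =>
    rw [show 2 * (s + 1) + 1 = (2 * s + 1) + 1 + 1 by ring, Multiset.range_succ,
      Multiset.range_succ, oddParts_succ]
    simp only [Multiset.map_cons, tailSum_cons, ih]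
    ring_nf

lemma even_tailSum_oddParts (m : ℕ → ℕ) (s : ℕ) {c : ℕ} (hc : Odd c) :
    Even (tailSum (oddParts m s) c) := by
  rw [Nat.even_iff, tailSum_mod_two _ hc, Multiset.filter_eq_nil.2]
  · rfl
  · rintro x hx ⟨hx2, -⟩
    obtain ⟨i, -, rfl⟩ := Multiset.mem_map.1 hx
    rw [Nat.even_iff] at hx2
    omega

lemma even_tailSum_evenParts (m : ℕ → ℕ) (s n : ℕ) : Even (tailSum (evenParts m s) (2 * n)) := by
  induction s with
  | zero => simp [evenParts]
  | succ s ih =>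
    rw [evenParts_succ]
    rw [Nat.even_iff] at *
    omega

lemma evenParts_sum (m : ℕ → ℕ) (s : ℕ)
    (hm : ∀ i j, 1 ≤ i → i < j → j ≤ 2 * s + 1 → m i < m j) :
    tailSum (evenParts m s) 0 = tailSum (oddParts m s) 0 := by
  induction s with
  | zero => simp [evenParts, oddParts]
  | succ s ih =>
    rw [evenParts_succ, oddParts_succ, ih fun i j h1 h2 h3 => hm i j h1 h2 (by omega)]
    omega

lemma evenParts_le (m : ℕ → ℕ) (s c : ℕ)
    (hm : ∀ i j, 1 ≤ i → i < j → j ≤ 2 * s + 1 → m i < m j) :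
    tailSum (evenParts m s) c ≤ tailSum (oddParts m s) c := by
  induction s with
  | zero => simp [evenParts]
  | succ s ih =>
    have h1 := ih fun i j h1 h2 h3 => hm i j h1 h2 (by omega)
    have h2 := hm (2 * s + 2) (2 * s + 3) (by omega) (by omega) (by omega)
    rw [evenParts_succ, oddParts_succ]
    omega

/-- The excess of the left side telescopes to at most `1`, and to `0` once `c > 2 m_{2s+1}`; the
refined bound is what the induction on `s` needs. -/
lemma le_evenParts (m : ℕ → ℕ) (s c : ℕ)
    (hm : ∀ i j, 1 ≤ i → i < j → j ≤ 2 * s + 1 → m i < m j) :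
    (2 * m 1 + 1 - c) + tailSum (oddParts m s) c ≤
      (2 * m 1 - c) + tailSum (evenParts m s) c + (if c ≤ 2 * m (2 * s + 1) then 1 else 0) := by
  induction s with
  | zero =>
    simp only [oddParts, evenParts, Nat.mul_zero, Nat.zero_add, Multiset.range_zero,
      Multiset.map_zero, Multiset.zero_bind, tailSum_zero]
    split_ifs <;> omega
  | succ s ih =>
    have h1 := ih fun i j h1 h2 h3 => hm i j h1 h2 (by omega)
    have h2 := hm (2 * s + 2) (2 * s + 3) (by omega) (by omega) (by omega)
    have h3 := hm (2 * s + 1) (2 * s + 2) (by omega) (by omega) (by omega)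
    rw [evenParts_succ, oddParts_succ, show 2 * (s + 1) + 1 = 2 * s + 3 by ring]
    split_ifs at h1 ⊢ <;> omega

lemma zero_notMem_evenParts (m : ℕ → ℕ) (s : ℕ)
    (hm : ∀ i j, 1 ≤ i → i < j → j ≤ 2 * s + 1 → m i < m j) : 0 ∉ evenParts m s := by
  intro h
  unfold evenParts at h
  obtain ⟨j, hj, h⟩ := Multiset.mem_bind.1 h
  rw [Multiset.mem_range] at hj
  have := hm (2 * j + 2) (2 * j + 3) (by omega) (by omega) (by omega)
  simp only [Multiset.insert_eq_cons, Multiset.mem_cons, Multiset.mem_singleton] at h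
  omega

/-! ### Maximality of the collapse -/

/-- At an odd part `c` of the collapse of `p`, either the tail sum agrees with that of `p` or there
would be room to replace `c, c` by `c + 1, c - 1`. -/
lemma IsSpCollapse.tailSum_eq {p d : Multiset ℕ} (h : IsSpCollapse p d) {c : ℕ} (hc : c ∈ d)
    (hco : Odd c) : tailSum d c = tailSum p c := by
  obtain ⟨h0, hs, hd, hmax⟩ := h
  rw [dominates_iff] at hd
  refine le_antisymm (hd.2 c) ?_
  by_contra! hlt
  have h1 : 1 ≤ d.count c := Multiset.one_le_count_iff_mem.2 hc
  have h2 : 2 ≤ d.count c := by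
    have := hs c hco
    rw [Nat.even_iff] at this
    omega
  obtain ⟨t, rfl⟩ : ∃ t, d = c ::ₘ c ::ₘ t := by
    obtain ⟨t, ht⟩ := Multiset.le_iff_exists_add.1 (Multiset.le_count_iff_replicate_le.1 h2)
    exact ⟨t, by simp [ht, Multiset.replicate_succ]⟩
  have hc2 := Nat.odd_iff.1 hco
  set d' : Multiset ℕ := (c + 1) ::ₘ (t + if 1 < c then {c - 1} else 0) with hd'
  have hF : ∀ x, tailSum d' x = tailSum (c ::ₘ c ::ₘ t) x + if x = c then 1 else 0 := by
    intro x
    rw [hd']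
    split_ifs <;> simp only [tailSum_cons, tailSum_add, tailSum_singleton, tailSum_zero] <;> omega
  have hle : ∀ x, tailSum d' x ≤ tailSum p x := by
    intro x
    rw [hF]
    have := hd.2 x
    split_ifs with hx
    · subst hx; omega
    · omega
  have hsum : d'.sum = (c ::ₘ c ::ₘ t).sum := by
    rw [← tailSum_at_zero, hF, if_neg (by omega), tailSum_at_zero, Nat.add_zero]
  have h0' : 0 ∉ d' := by
    simp only [Multiset.mem_cons, not_or] at h0
    rw [hd']
    split_ifs <;>
      simp only [Multiset.mem_cons, Multiset.mem_add, Multiset.mem_singleton,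
        Multiset.notMem_zero, h0.2.2, false_or, or_false] <;> omega
  have hsymp : IsSymplectic d' := by
    refine isSymplectic_of_tailSum fun n => ?_
    rw [hF, if_neg (by omega)]
    exact even_tailSum hs n
  have := ((dominates_iff _ _).1 (hmax d' h0' hsymp
    ((dominates_iff _ _).2 ⟨hd.1.trans hsum.symm, hle⟩))).2 c
  rw [hF, if_pos rfl] at this
  omega

/-- With `q` and `p₂` as in Statement 4 (`p₂` built from two copies of
each element of `E`, the Sp-collapse `c'` of `[(2 m (2s+1) + 1) ⋯ (2 m 2 + 1)]`, and an
extra part `2 * m 1` when `m 1 > 0`), the partition `p₂` is symplectic and the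
Sp-collapse of `q⁻` equals the Sp-expansion of `p₂`. -/
theorem spCollapse_qminus_eq_spExpansion
    (s : ℕ) (E : Multiset ℕ) (hE : ∀ x ∈ E, 0 < x)
    (m : ℕ → ℕ) (hm : ∀ i j, 1 ≤ i → i < j → j ≤ 2 * s + 1 → m i < m j)
    (c' : Multiset ℕ)
    (hc' : IsSpCollapse ((Multiset.range (2 * s)).map fun i => 2 * m (i + 2) + 1) c') :
    IsSymplectic (E + E + c' + (if 0 < m 1 then ({2 * m 1} : Multiset ℕ) else 0)) ∧
      ∀ cc e : Multiset ℕ,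
        IsSpCollapse
          (qminus (E + E + (Multiset.range (2 * s + 1)).map fun i => 2 * m (i + 1) + 1)) cc →
        IsSpExpansion (E + E + c' + (if 0 < m 1 then ({2 * m 1} : Multiset ℕ) else 0)) e →
        cc = e := by
  have hsymp : IsSymplectic (E + E + c' + (if 0 < m 1 then ({2 * m 1} : Multiset ℕ) else 0)) := by
    refine isSymplectic_of_tailSum fun n => ?_
    have h1 := even_tailSum hc'.2.1 n
    rw [Nat.even_iff] at h1 ⊢
    split_ifs <;> simp only [tailSum_add, tailSum_singleton, tailSum_zero] <;> omega
  refine ⟨hsymp, fun cc e hcc he => ?_⟩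
  set p₂ : Multiset ℕ := E + E + c' + (if 0 < m 1 then ({2 * m 1} : Multiset ℕ) else 0) with hp₂
  set q : Multiset ℕ := E + E + (Multiset.range (2 * s + 1)).map fun i => 2 * m (i + 1) + 1
    with hq
  have Fp : ∀ c, tailSum p₂ c = 2 * tailSum E c + tailSum c' c + (2 * m 1 - c) := by
    intro c
    rw [hp₂]
    split_ifs <;> simp only [tailSum_add, tailSum_singleton, tailSum_zero] <;> omega
  have Fq : ∀ c, tailSum q c =
      2 * tailSum E c + ((2 * m 1 + 1 - c) + tailSum (oddParts m s) c) := by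
    intro c
    rw [hq, tailSum_add, tailSum_add, tailSum_allParts]
    omega
  have Fq_even : ∀ c, Odd c → Even (tailSum q c) := by
    intro c hc
    have := even_tailSum_oddParts m s hc
    rw [Fq]
    rw [Nat.odd_iff] at hc
    rw [Nat.even_iff] at this ⊢
    omega
  have Fc' : tailSum c' 0 = tailSum (oddParts m s) 0 ∧
      (∀ c, tailSum c' c ≤ tailSum (oddParts m s) c) ∧
      ∀ c, tailSum (evenParts m s) c ≤ tailSum c' c := by
    change IsSpCollapse (oddParts m s) c' at hc'
    obtain ⟨-, -, h3, h4⟩ := hc'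
    have h5 := h4 _ (zero_notMem_evenParts m s hm)
      (isSymplectic_of_tailSum (even_tailSum_evenParts m s))
      ((dominates_iff _ _).2 ⟨by
        rw [← tailSum_at_zero, ← tailSum_at_zero, evenParts_sum m s hm],
        fun c => evenParts_le m s c hm⟩)
    rw [dominates_iff] at h3 h5
    refine ⟨?_, h3.2, h5.2⟩
    rw [tailSum_at_zero, tailSum_at_zero, h3.1]
  have Fq_le : ∀ c, tailSum q c ≤ tailSum p₂ c + 1 := by
    intro c
    have h1 := le_evenParts m s c hm
    have h2 := Fc'.2.2 c
    rw [Fp, Fq]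
    split_ifs at h1 <;> omega
  have hm1 : 2 * m 1 + 1 ∈ q := by
    rw [hq]
    exact Multiset.mem_add.2 (Or.inr (Multiset.mem_map.2 ⟨0, Multiset.mem_range.2 (by omega), rfl⟩))
  have hq0 : 0 ∉ q := by
    rw [hq]
    intro h
    simp only [Multiset.mem_add, Multiset.mem_map] at h
    rcases h with (h | h) | ⟨i, -, h⟩
    · exact absurd (hE 0 h) (by omega)
    · exact absurd (hE 0 h) (by omega)
    · omega
  have hp0 : 0 ∉ p₂ := by
    rw [hp₂]
    intro h
    rw [Multiset.mem_add, Multiset.mem_add, Multiset.mem_add] at h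
    rcases h with ((h | h) | h) | h
    · exact absurd (hE 0 h) (by omega)
    · exact absurd (hE 0 h) (by omega)
    · exact hc'.1 h
    · split_ifs at h with h1
      · rw [Multiset.mem_singleton] at h
        omega
      · simp at h
  obtain ⟨a, haq, hamin, Fqm⟩ := qminus_spec (fun h => by rw [h] at hm1; simp at hm1) hq0
  have ha0 : a ≠ 0 := fun h => hq0 (h ▸ haq)
  have ham : a ≤ 2 * m 1 + 1 := hamin _ hm1
  have hccd := (dominates_iff _ _).1 hcc.2.2.1
  have hcc_le_q : ∀ c, tailSum cc c ≤ tailSum q c := by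
    intro c
    have h1 := Fqm c
    have h2 := hccd.2 c
    omega
  have hdom : Dominates cc p₂ := by
    refine hcc.2.2.2 p₂ hp0 hsymp ((dominates_iff _ _).2 ⟨?_, fun c => ?_⟩)
    · have h1 := Fqm 0
      rw [if_pos (by omega)] at h1
      rw [← tailSum_at_zero, ← tailSum_at_zero]
      have h2 := Fp 0
      have h3 := Fq 0
      have h4 := Fc'.1
      omega
    · have h1 := Fqm c
      have h2 := Fp c
      have h3 := Fq c
      have h4 := Fc'.2.1 c
      split_ifs at h1 <;> omega
  have hspec : IsSpecial cc := by
    refine isSpecial_of_tailSum hcc.2.1 fun c hc hco => ?_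
    have htouch := hcc.tailSum_eq hc hco
    by_contra hodd
    have h1 := Fqm c
    have h2 := Fq_even c hco
    have hca : c < a := by
      by_contra hca
      rw [if_neg hca, Nat.add_zero, ← htouch] at h1
      exact hodd (h1 ▸ h2)
    obtain ⟨k, rfl⟩ : ∃ k, c = k + 1 := ⟨c - 1, by rw [Nat.odd_iff] at hco; omega⟩
    have hcq : q.count (k + 1) = 0 :=
      Multiset.count_eq_zero_of_notMem fun h => absurd (hamin _ h) (by omega)
    have hcc2 : 2 ≤ cc.count (k + 1) := by
      have h3 := hcc.2.1 _ hco
      have h4 : 1 ≤ cc.count (k + 1) := Multiset.one_le_count_iff_mem.2 hc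
      rw [Nat.even_iff] at h3
      omega
    -- Second differences at `k + 1`: at least `2` for `cc`, at most `1` for `q⁻`.
    have d1 := tailSum_count cc k
    have d2 := tailSum_count q k
    have e0 := Fqm k
    have e2 := Fqm (k + 2)
    have f0 := hccd.2 k
    have f2 := hccd.2 (k + 2)
    rw [if_pos hca] at h1
    rw [if_pos (by omega)] at e0
    omega
  have hce := (dominates_iff _ _).1 (he.2.2.2 cc hcc.1 hspec hdom)
  have hep := (dominates_iff _ _).1 he.2.2.1
  have hle_even : ∀ n, tailSum cc (2 * n) ≤ tailSum e (2 * n) := by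
    intro n
    have h1 := even_tailSum hcc.2.1 n
    have h2 := even_tailSum he.2.1.1 n
    have h3 := hcc_le_q (2 * n)
    have h4 := Fq_le (2 * n)
    have h5 := hep.2 (2 * n)
    rw [Nat.even_iff] at h1 h2
    omega
  have hle : ∀ c, tailSum cc c ≤ tailSum e c := by
    intro c
    rcases Nat.even_or_odd' c with ⟨n, rfl | rfl⟩
    · exact hle_even n
    · by_contra! hlt
      have hco : Odd (2 * n + 1) := ⟨n, rfl⟩
      have h3 := hcc_le_q (2 * n + 1)
      have h4 := Fq_le (2 * n + 1)
      have h5 := hep.2 (2 * n + 1)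
      have h6 := Fq_even _ hco
      have hne : 2 * n + 1 ∉ e := by
        intro h
        have h7 := he.2.1.even_tailSum _ h hco
        rw [Nat.even_iff] at h6 h7
        omega
      have d1 := tailSum_count e (2 * n)
      have d2 := tailSum_count cc (2 * n)
      rw [Multiset.count_eq_zero_of_notMem hne] at d1
      have g0 := hle_even n
      have g2 := hle_even (n + 1)
      rw [show 2 * (n + 1) = 2 * n + 2 by ring] at g2
      omega
  exact eq_of_tailSum_eq hcc.1 he.1 fun c => le_antisymm (hle c) (hce.2 c)
end
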